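/- Let ω be a symplectic form (a closed, nondegenerate smooth 2-form) on a neighborhood of 0 in ℝ⁴ such that: (a) ω − ω₀ has all coefficients flat at the origin; (b) the regular level sets of q = (q₁,q₂) are Lagrangian for ω, i.e. ω(X⁰_{q₁}, X⁰_{q₂}) = 0 where X⁰_{qᵢ} are the Hamiltonian vector fields of q₁,q₂ for ω₀; (c) for every z = (z₁,z₂) near 0 (identifying ℝ⁴ with ℂ²), ∫_{D_z} (ω − ω₀) = 0, where D_z = {(ζz₁,ζz₂) : ζ ∈ ℂ, |ζ| ≤ 1}, i.e. the integral over the closed unit disc of the pullback of ω − ω₀ by ζ ↦ (ζz₁,ζz₂) vanishes. Then there exist a local diffeomorphism Φ of (ℝ⁴,0) and a local diffeomorphism U = (U₁,U₂) of (ℝ²,0), both with difference from the identity flat at the origin, such that Φ*ω = ω₀, q₁∘Φ = U₁∘(q₁,q₂), and q₂∘Φ = U₂∘(q₁,q₂) near the origin. -/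

import Mathlib

open Filter Topology Set MeasureTheory

noncomputable section

/-- ℝ⁴ with coordinates `(x₁, ξ₁, x₂, ξ₂) = (p 0, p 1, p 2, p 3)`,
identified with ℂ² via `z₁ = x₁ + ix₂`, `z₂ = ξ₁ + iξ₂`. -/
abbrev E4 : Type := Fin 4 → ℝ

/-- ℝ². -/
abbrev E2 : Type := Fin 2 → ℝ

/-- The focus-focus quadratic form `q₁ = x₁ξ₁ + x₂ξ₂`. -/
def q1 (p : E4) : ℝ := p 0 * p 1 + p 2 * p 3

/-- The focus-focus quadratic form `q₂ = x₁ξ₂ − x₂ξ₁`. -/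
def q2 (p : E4) : ℝ := p 0 * p 3 - p 2 * p 1

/-- The map `q = (q₁, q₂) : ℝ⁴ → ℝ²`. -/
def qmap (p : E4) : E2 := ![q1 p, q2 p]

/-- The canonical symplectic form `ω₀ = dξ₁∧dx₁ + dξ₂∧dx₂` as a bilinear form on ℝ⁴. -/
def omega0 (u v : E4) : ℝ := u 1 * v 0 - u 0 * v 1 + u 3 * v 2 - u 2 * v 3

/-- The Hamiltonian vector field of `q₁` for `ω₀`:
`X⁰_{q₁} = (∂q₁/∂ξ₁, −∂q₁/∂x₁, ∂q₁/∂ξ₂, −∂q₁/∂x₂) = (x₁, −ξ₁, x₂, −ξ₂)`. -/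
def X01 (p : E4) : E4 := ![p 0, -(p 1), p 2, -(p 3)]

/-- The Hamiltonian vector field of `q₂` for `ω₀`:
`X⁰_{q₂} = (∂q₂/∂ξ₁, −∂q₂/∂x₁, ∂q₂/∂ξ₂, −∂q₂/∂x₂) = (−x₂, −ξ₂, x₁, ξ₁)`. -/
def X02 (p : E4) : E4 := ![-(p 2), -(p 3), p 0, p 1]

/-- A map is flat at a point if all its iterated derivatives vanish there. -/
def flatAt {E F : Type*} [NormedAddCommGroup E] [NormedSpace ℝ E]
    [NormedAddCommGroup F] [NormedSpace ℝ F] (f : E → F) (x : E) : Prop :=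
  ∀ n : ℕ, iteratedFDeriv ℝ n f x = 0

/-- The map `j_z : ℂ → ℂ² ≅ ℝ⁴`, `ζ ↦ (ζz₁, ζz₂)`, parametrizing the disc `D_z`. -/
def discMap (p : E4) (ζ : ℂ) : E4 :=
  ![ζ.re * p 0 - ζ.im * p 2,
    ζ.re * p 1 - ζ.im * p 3,
    ζ.re * p 2 + ζ.im * p 0,
    ζ.re * p 3 + ζ.im * p 1]

/-- The image of `p` under multiplication by `i` on ℂ² ≅ ℝ⁴; together with `p` itself,
these are the two partial derivatives `∂j_z/∂(Re ζ) = z` and `∂j_z/∂(Im ζ) = iz` of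
`j_z`, so that the pullback to the unit disc of a `2`-form `ω` under `j_z` is
`ω_{j_z(ζ)}(z, iz)·dRe ζ∧dIm ζ`. -/
def Jmul (p : E4) : E4 := ![-(p 2), -(p 3), p 0, p 1]

section aux

open scoped ContDiff
open Asymptotics

section general
variable {H F : Type} [NormedAddCommGroup H] [NormedSpace ℝ H] [ProperSpace H]
  [NormedAddCommGroup F] [NormedSpace ℝ F]

theorem hasFDerivAt_paramInt (G : ℝ × H → F) (hG : ContDiff ℝ 1 G) (a b : ℝ) (x₀ : H) :
    HasFDerivAt (fun x => ∫ t in a..b, G (t, x))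
      (∫ t in a..b, (fderiv ℝ G (t, x₀)).comp (ContinuousLinearMap.inr ℝ ℝ H)) x₀ := by
  have hc : Continuous (fun y : ℝ × H => (fderiv ℝ G y).comp (ContinuousLinearMap.inr ℝ ℝ H)) :=
    (hG.continuous_fderiv (by simp)).clm_comp continuous_const
  obtain ⟨C, hC⟩ := ((isCompact_uIcc (a := a) (b := b)).prod
    (isCompact_closedBall x₀ 1)).exists_bound_of_continuousOn hc.continuousOn
  refine intervalIntegral.hasFDerivAt_integral_of_dominated_of_fderiv_le
    (F := fun x t => G (t, x))
    (F' := fun x t => (fderiv ℝ G (t, x)).comp (ContinuousLinearMap.inr ℝ ℝ H))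
    (bound := fun _ => C) (s := Metric.closedBall x₀ 1)
    (Metric.closedBall_mem_nhds _ one_pos) ?_ ?_ ?_ ?_ ?_ ?_
  · refine Eventually.of_forall fun x => Continuous.aestronglyMeasurable ?_
    exact hG.continuous.comp (by fun_prop)
  · exact (hG.continuous.comp (by fun_prop)).intervalIntegrable _ _
  · have : SecondCountableTopologyEither ℝ (H →L[ℝ] F) := secondCountableTopologyEither_of_left _ _
    refine Continuous.aestronglyMeasurable ?_
    exact hc.comp (by fun_prop)
  · refine Eventually.of_forall fun t ht x hx => hC (t, x) ⟨?_, hx⟩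
    exact uIoc_subset_uIcc ht
  · simp
  · refine Eventually.of_forall fun t ht x hx => ?_
    exact ((hG.differentiable (by simp)) (t, x)).hasFDerivAt.comp x
      (hasFDerivAt_prodMk_right t x)

theorem contDiff_paramInt_nat (n : ℕ) : ∀ {F : Type} [NormedAddCommGroup F] [NormedSpace ℝ F]
    (G : ℝ × H → F) (_ : ContDiff ℝ ∞ G) (a b : ℝ),
    ContDiff ℝ n (fun x => ∫ t in a..b, G (t, x)) := by
  induction n with
  | zero =>
    intro F _ _ G hG a b
    have : ContDiff ℝ 1 G := hG.of_le (by exact_mod_cast le_top)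
    exact contDiff_zero.2 (continuous_iff_continuousAt.2 fun x =>
      (hasFDerivAt_paramInt G this a b x).continuousAt)
  | succ n ih =>
    intro F _ _ G hG a b
    have h1 : ContDiff ℝ 1 G := hG.of_le (by exact_mod_cast le_top)
    push_cast
    rw [contDiff_succ_iff_hasFDerivAt]
    refine ⟨_, ?_, fun x => hasFDerivAt_paramInt G h1 a b x⟩
    refine ih (fun y => (fderiv ℝ G y).comp (ContinuousLinearMap.inr ℝ ℝ H)) ?_ a b
    exact (hG.fderiv_right (by simp)).clm_comp contDiff_const

theorem contDiff_paramInt (G : ℝ × H → F) (hG : ContDiff ℝ ∞ G) (a b : ℝ) :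
    ContDiff ℝ ∞ (fun x => ∫ t in a..b, G (t, x)) :=
  contDiff_infty.2 fun n => contDiff_paramInt_nat n G hG a b

/-- flat smooth maps -/
def Fl (g : H → F) : Prop := ContDiff ℝ ∞ g ∧ ∀ N : ℕ, g =O[𝓝 0] fun z => ‖z‖ ^ N

theorem flat_isBigO (N : ℕ) : ∀ {F : Type} [NormedAddCommGroup F] [NormedSpace ℝ F]
    (g : H → F) (_ : ContDiff ℝ ∞ g) (_ : flatAt g 0), g =O[𝓝 0] fun z => ‖z‖ ^ N := by
  induction N with
  | zero =>
    intro F _ _ g hg _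
    simpa using (hg.continuous.tendsto 0).isBigO_one ℝ
  | succ N ih =>
    intro F _ _ g hg hf
    have hd : ContDiff ℝ ∞ (fderiv ℝ g) := hg.fderiv_right (by simp)
    have hfd : flatAt (fderiv ℝ g) 0 := by
      intro n
      rw [← norm_eq_zero, norm_iteratedFDeriv_fderiv, hf (n+1), norm_zero]
    obtain ⟨C, hC⟩ := (ih _ hd hfd).bound
    obtain ⟨r, hr, hb⟩ := Metric.eventually_nhds_iff_ball.1 hC
    have h0 : g 0 = 0 := by
      have := hf 0
      rw [← norm_eq_zero, norm_iteratedFDeriv_zero] at this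
      exact norm_eq_zero.1 this
    refine IsBigO.of_bound C ?_
    filter_upwards [Metric.ball_mem_nhds (0:H) hr] with z hz
    have hz' : ‖z‖ < r := by simpa using hz
    have key := (convex_closedBall (0:H) ‖z‖).norm_image_sub_le_of_norm_fderiv_le (𝕜 := ℝ)
      (f := g) (C := C * ‖z‖ ^ N) (x := 0) (y := z) (fun x _ => hg.differentiable (by simp) x)
      (fun x hx => ?_) (by simp) (by simp)
    · rw [h0, sub_zero, sub_zero] at key
      simpa [pow_succ, mul_assoc] using key
    · have hx' : ‖x‖ ≤ ‖z‖ := by simpa using hx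
      have h1 := hb x (by simpa using lt_of_le_of_lt hx' hz')
      simp only [norm_pow, norm_norm] at h1
      have hC0 : 0 ≤ C ∨ ‖x‖ ^ N = 0 ∨ C < 0 := by
        rcases le_or_gt 0 C with h | h
        · exact Or.inl h
        · exact Or.inr (Or.inr h)
      rcases le_or_gt 0 C with h | h
      · exact h1.trans (by gcongr)
      · have h2 := hb z hz
        simp only [norm_pow, norm_norm] at h2
        have h3 : ‖z‖ ^ N ≤ 0 := by
          have := norm_nonneg (fderiv ℝ g z)
          nlinarith
        have h4 : ‖z‖ ^ N = 0 := le_antisymm h3 (by positivity)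
        have h5 : ‖x‖ ^ N = 0 := le_antisymm (h4 ▸ (by gcongr)) (by positivity)
        rw [h4]; rw [h5] at h1; exact h1

theorem Fl.fderiv {g : H → F} (hg : Fl g) : Fl (_root_.fderiv ℝ g) := by
  have hd : ContDiff ℝ ∞ (_root_.fderiv ℝ g) := hg.1.fderiv_right (by simp)
  refine ⟨hd, fun N => ?_⟩
  -- bound on second derivative on the closed ball of radius 2
  obtain ⟨M, hM⟩ := (isCompact_closedBall (0:H) 2).exists_bound_of_continuousOn
    (hd.continuous_fderiv (by simp)).continuousOn
  have hM0 : 0 ≤ M := (norm_nonneg _).trans (hM 0 (by simp))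
  -- choose exponent 2 (N+1)
  obtain ⟨C, hC⟩ := (hg.2 (2 * (N+1))).bound
  obtain ⟨r, hr, hb⟩ := Metric.eventually_nhds_iff_ball.1 hC
  set C' := max C 0 with hC'
  have hb' : ∀ z : H, ‖z‖ < r → ‖g z‖ ≤ C' * ‖z‖ ^ (2*(N+1)) := by
    intro z hz
    have := hb z (by simpa using hz)
    simp only [norm_pow, norm_norm] at this
    exact this.trans (by gcongr; exact le_max_left _ _)
  have hC'0 : 0 ≤ C' := le_max_right _ _
  refine IsBigO.of_bound (C' * (2 ^ (2*(N+1)) + 1) * 2 + M) ?_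
  filter_upwards [Metric.ball_mem_nhds (0:H) (lt_min one_pos (half_pos hr))] with z hz
  have hz' : ‖z‖ < min 1 (r/2) := by simpa using hz
  have hz1 : ‖z‖ < 1 := hz'.trans_le (min_le_left _ _)
  have hz2 : ‖z‖ < r/2 := hz'.trans_le (min_le_right _ _)
  simp only [norm_pow, norm_norm]
  set ρ := ‖z‖ with hρ
  have hρ0 : 0 ≤ ρ := norm_nonneg _
  rcases hρ0.eq_or_lt with h0 | hpos
  · -- z = 0
    have hz0 : z = 0 := norm_eq_zero.1 h0.symm
    have hflat1 : HasFDerivAt g (0 : H →L[ℝ] F) 0 := by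
      have h2 := hg.2 2
      rw [hasFDerivAt_iff_isLittleO]
      have hg0 : g 0 = 0 := by
        have := hb' 0 (by simpa using hr)
        simpa using this
      simp only [hg0, sub_zero, zero_apply]
      refine h2.trans_isLittleO ?_
      have := (isLittleO_norm_pow_id (E' := H) (n := 2) (by norm_num))
      exact this
    rw [hz0, hflat1.fderiv, norm_zero]
    positivity
  refine ContinuousLinearMap.opNorm_le_of_shell (ε := ρ^(N+1)) (c := (2:ℝ)) (by positivity) (by positivity) (by norm_num) ?_
  intro h hh1 hh2
  have hle1 : ρ^(N+1) ≤ ρ := by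
    rw [pow_succ]; exact mul_le_of_le_one_left hρ0 (pow_le_one₀ hρ0 hz1.le)
  have hnorm : ‖z + h‖ ≤ 2 * ρ := by
    refine (norm_add_le _ _).trans ?_
    have : ‖h‖ ≤ ρ := hh2.le.trans hle1
    linarith
  have key : ‖g (z+h) - g z - _root_.fderiv ℝ g z (z + h - z)‖ ≤ (M * ‖h‖) * ‖z + h - z‖ := by
    have hball : ∀ x ∈ Metric.closedBall z ‖h‖, ‖_root_.fderiv ℝ g x - _root_.fderiv ℝ g z‖ ≤ M * ‖h‖ := by
      intro x hx
      have := (convex_closedBall z ‖h‖).norm_image_sub_le_of_norm_fderiv_le (𝕜 := ℝ)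
        (f := _root_.fderiv ℝ g) (C := M) (x := z) (y := x)
        (fun x _ => hd.differentiable (by simp) x) (fun y hy => hM y ?_) (by simp) hx
      · refine this.trans ?_
        have : ‖x - z‖ ≤ ‖h‖ := by simpa [dist_eq_norm] using hx
        gcongr
      · have h1 : ‖y - z‖ ≤ ‖h‖ := by simpa [dist_eq_norm] using hy
        have h2 : ‖y‖ ≤ ‖y - z‖ + ‖z‖ := by simpa using norm_add_le (y - z) z
        simp only [Metric.mem_closedBall, dist_zero_right]
        linarith [hh2.le, hle1, hρ]
    exact (convex_closedBall z ‖h‖).norm_image_sub_le_of_norm_hasFDerivWithin_le'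
      (f' := fun x => _root_.fderiv ℝ g x)
      (fun x _ => (hg.1.differentiable (by simp) x).hasFDerivAt.hasFDerivWithinAt)
      hball (by simp) (by simp)
  rw [add_sub_cancel_left] at key
  have e1 : ‖_root_.fderiv ℝ g z h‖ ≤ ‖g (z+h)‖ + ‖g z‖ + M * ‖h‖ * ‖h‖ := by
    have : _root_.fderiv ℝ g z h = g (z+h) - g z - (g (z+h) - g z - _root_.fderiv ℝ g z h) := by abel
    rw [this]
    refine (norm_sub_le _ _).trans ?_
    have := norm_sub_le (g (z+h)) (g z)
    linarith
  have e2 : ‖g (z+h)‖ ≤ C' * (2^(2*(N+1)) * ρ^(2*(N+1))) := by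
    refine (hb' (z+h) (by linarith)).trans ?_
    rw [← mul_pow]
    gcongr
  have e3 : ‖g z‖ ≤ C' * ρ^(2*(N+1)) := hb' z (by linarith)
  have e4 : ρ^(2*(N+1)) ≤ ρ^N * (2 * ‖h‖) := by
    have h1 : ρ^(N+1) ≤ 2 * ‖h‖ := by
      have : ρ^(N+1) / ‖(2:ℝ)‖ ≤ ‖h‖ := hh1
      rw [Real.norm_of_nonneg (by norm_num)] at this
      linarith
    have h2 : ρ^(2*(N+1)) = ρ^(N+1) * ρ^(N+1) := by ring
    rw [h2]
    have h3 : ρ^(N+1) ≤ ρ^N := pow_le_pow_of_le_one hρ0 hz1.le (Nat.le_succ _)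
    gcongr
  have e5 : ‖h‖ ≤ ρ^N := hh2.le.trans (pow_le_pow_of_le_one hρ0 hz1.le (Nat.le_succ _))
  calc ‖_root_.fderiv ℝ g z h‖ ≤ C' * (2^(2*(N+1)) * ρ^(2*(N+1))) + C' * ρ^(2*(N+1)) + M * ‖h‖ * ‖h‖ := by
        linarith
    _ = C' * (2^(2*(N+1)) + 1) * ρ^(2*(N+1)) + M * ‖h‖ * ‖h‖ := by ring
    _ ≤ C' * (2^(2*(N+1)) + 1) * (ρ^N * (2 * ‖h‖)) + M * ρ^N * ‖h‖ := by gcongr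
    _ = _ := by ring

theorem Fl.flatAt {g : H → F} (hg : Fl g) : flatAt g 0 := by
  intro n
  induction n generalizing F with
  | zero =>
    obtain ⟨C, hC⟩ := (hg.2 1).bound
    have := hC.self_of_nhds
    rw [← norm_eq_zero, norm_iteratedFDeriv_zero]
    simpa using this
  | succ n ih =>
    rw [← norm_eq_zero, ← norm_iteratedFDeriv_fderiv, ih hg.fderiv, norm_zero]

theorem fl_of_flatAt {g : H → F} (hg : ContDiff ℝ ∞ g) (h : _root_.flatAt g 0) : Fl g :=
  ⟨hg, fun N => flat_isBigO N g hg h⟩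

end general

theorem exists_ext {F : Type} [NormedAddCommGroup F] [NormedSpace ℝ F] (g : E4 → F) (V : Set E4)
    (hV : IsOpen V) (h0 : (0:E4) ∈ V) (hg : ContDiffOn ℝ ∞ g V) :
    ∃ g' : E4 → F, ContDiff ℝ ∞ g' ∧ ∃ r > 0, ∀ p ∈ Metric.ball (0:E4) r, p ∈ V ∧ g' p = g p := by
  obtain ⟨R, hR, hRV⟩ := Metric.isOpen_iff.1 hV 0 h0
  let χ : ContDiffBump (0:E4) := ⟨R/4, R/2, by positivity, by linarith⟩
  refine ⟨fun p => χ p • g p, ?_, R/4, by positivity, fun p hp => ⟨hRV ?_, ?_⟩⟩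
  · rw [contDiff_iff_contDiffAt]
    intro p
    by_cases hp : p ∈ Metric.ball (0:E4) R
    · exact (χ.contDiff.contDiffAt).smul (hg.contDiffAt (hV.mem_nhds (hRV hp)))
    · have : (fun p => χ p • g p) =ᶠ[𝓝 p] fun _ => 0 := by
        have hp' : p ∈ (Metric.closedBall (0:E4) (R/2))ᶜ := by
          intro h
          apply hp
          exact Metric.closedBall_subset_ball (by linarith) h
        filter_upwards [Metric.isClosed_closedBall.isOpen_compl.mem_nhds hp'] with y hy
        have : χ y = 0 := χ.zero_of_le_dist (by
          have : ¬ dist y 0 ≤ R/2 := hy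
          exact (not_le.1 this).le)
        simp [this]
      exact contDiffAt_const.congr_of_eventuallyEq this
  · exact Metric.ball_subset_ball (by linarith) hp
  · have : χ p = 1 := χ.one_of_mem_closedBall (Metric.ball_subset_closedBall hp)
    simp [this]

/-- squared Euclidean norm -/
def nsq (p : E4) : ℝ := p 0 ^ 2 + p 1 ^ 2 + p 2 ^ 2 + p 3 ^ 2
/-- squared Euclidean norm of the `x` part -/
def nx (p : E4) : ℝ := p 0 ^ 2 + p 2 ^ 2

theorem nsq_contDiff : ContDiff ℝ ∞ nsq := by unfold nsq; fun_prop
theorem nx_contDiff : ContDiff ℝ ∞ nx := by unfold nx; fun_prop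

theorem norm_sq_le_nsq (p : E4) : ‖p‖ ^ 2 ≤ nsq p := by
  have h : ‖p‖ ≤ Real.sqrt (nsq p) := by
    rw [pi_norm_le_iff_of_nonneg (Real.sqrt_nonneg _)]
    intro i
    rw [Real.norm_eq_abs]
    apply Real.abs_le_sqrt
    unfold nsq
    fin_cases i <;> simp <;> nlinarith [sq_nonneg (p 0), sq_nonneg (p 1), sq_nonneg (p 2), sq_nonneg (p 3)]
  have h2 : 0 ≤ nsq p := by unfold nsq; positivity
  calc ‖p‖^2 ≤ (Real.sqrt (nsq p))^2 := by gcongr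
    _ = _ := Real.sq_sqrt h2

theorem nsq_pos {p : E4} (hp : p ≠ 0) : 0 < nsq p :=
  lt_of_lt_of_le (by have := norm_pos_iff.2 hp; positivity) (norm_sq_le_nsq p)

theorem hasFDerivAt_zero_of_isBigO {H F : Type} [NormedAddCommGroup H] [NormedSpace ℝ H]
    [NormedAddCommGroup F] [NormedSpace ℝ F] {g : H → F}
    (h : g =O[𝓝 0] fun z => ‖z‖ ^ 2) : HasFDerivAt g (0 : H →L[ℝ] F) 0 := by
  have hg0 : g 0 = 0 := by
    obtain ⟨C, hC⟩ := h.bound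
    simpa using hC.self_of_nhds
  rw [hasFDerivAt_iff_isLittleO]
  simp only [hg0, sub_zero, zero_apply]
  exact h.trans_isLittleO (isLittleO_norm_pow_id (E' := H) (n := 2) (by norm_num))

section
variable {F : Type} [NormedAddCommGroup F] [NormedSpace ℝ F]

/-- cone cutoff and division -/
def Dv (g : E4 → F) (ψ : ℝ → ℝ) (k : ℕ) (z : E4) : F :=
  ((nsq z ^ k)⁻¹ * ψ (nx z * (nsq z)⁻¹)) • g z

theorem Dv_isBigO {g : E4 → F} (hg : Fl g) {ψ : ℝ → ℝ} (hψ : Continuous ψ) (k N : ℕ) :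
    Dv g ψ k =O[𝓝 0] fun z => ‖z‖ ^ N := by
  obtain ⟨M, hM⟩ := (isCompact_Icc (a := (0:ℝ)) (b := 1)).exists_bound_of_continuousOn hψ.continuousOn
  have hM0 : 0 ≤ M := (norm_nonneg _).trans (hM 0 (by simp))
  obtain ⟨C, hC⟩ := (hg.2 (N + 2*k)).bound
  refine IsBigO.of_bound (M * C) ?_
  filter_upwards [hC] with z hz
  rcases eq_or_ne z 0 with h0 | h0
  · have hg0 : g 0 = 0 := by
      obtain ⟨C, hC⟩ := (hg.2 1).bound
      simpa using hC.self_of_nhds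
    have hC0 : 0 ≤ C * ‖‖z‖ ^ (N + 2*k)‖ := (norm_nonneg _).trans hz
    rcases Nat.eq_zero_or_pos N with hN | hN
    · rcases Nat.eq_zero_or_pos k with hk | hk
      · subst hN hk
        simp at hC0
        simp [Dv, h0, hg0]
        positivity
      · subst hN
        obtain hC' | hC' := le_or_gt 0 C
        · simp [Dv, h0, hg0]; positivity
        · exfalso
          have hev : ∀ᶠ z : E4 in 𝓝 0, z = 0 := by
            filter_upwards [hC] with y hy
            by_contra hne
            have h1 := norm_pos_iff.2 hne
            have h2 := (norm_nonneg _).trans hy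
            have h3 : 0 < ‖‖y‖ ^ (0 + 2*k)‖ := by simp only [norm_pow, norm_norm]; positivity
            nlinarith
          obtain ⟨r, hr, hb⟩ := Metric.eventually_nhds_iff_ball.1 hev
          have := hb (fun _ => r/2) (by
            simp only [Metric.mem_ball, dist_zero_right]
            rw [pi_norm_const, Real.norm_of_nonneg (by positivity)]; linarith)
          have := congrFun this 0
          simp at this; linarith
    · simp [Dv, h0, hg0, hN.ne']
  · have hp := nsq_pos h0
    have hr : nx z * (nsq z)⁻¹ ∈ Icc (0:ℝ) 1 := by
      constructor
      · have : 0 ≤ nx z := by unfold nx; positivity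
        positivity
      · rw [← div_eq_mul_inv, div_le_one hp]
        unfold nx nsq
        nlinarith [sq_nonneg (z 1), sq_nonneg (z 3)]
    have hn := norm_pos_iff.2 h0
    simp only [norm_pow, norm_norm] at hz ⊢
    calc ‖Dv g ψ k z‖ = (nsq z ^ k)⁻¹ * ‖ψ (nx z * (nsq z)⁻¹)‖ * ‖g z‖ := by
          rw [Dv, norm_smul, norm_mul, Real.norm_of_nonneg (r := (nsq z ^ k)⁻¹) (by positivity)]
      _ ≤ ((‖z‖^2) ^ k)⁻¹ * M * (C * ‖z‖ ^ (N + 2*k)) := by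
          gcongr
          · exact norm_sq_le_nsq z
          · exact hM _ hr
      _ = M * C * ‖z‖ ^ N := by
          rw [pow_add, ← pow_mul]; field_simp

theorem Dv_hasFDerivAt {g : E4 → F} (hg : Fl g) {ψ : ℝ → ℝ} (hψ : ContDiff ℝ ∞ ψ) (k : ℕ) (z : E4) :
    HasFDerivAt (Dv g ψ k)
      (Dv (fderiv ℝ g) ψ k z + (fderiv ℝ nsq z).smulRight (-(k:ℝ) • Dv g ψ (k+1) z)
        + (nsq z • fderiv ℝ nx z - nx z • fderiv ℝ nsq z).smulRight (Dv g (deriv ψ) (k+2) z)) z := by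
  have hd : ContDiff ℝ ∞ (deriv ψ) := (contDiff_infty_iff_deriv.1 hψ).2
  rcases eq_or_ne z 0 with h0 | h0
  · subst h0
    have e0 : ∀ {F : Type} [NormedAddCommGroup F] [NormedSpace ℝ F] {g : E4 → F} (hg : Fl g)
        {ψ : ℝ → ℝ} (hψ : Continuous ψ) (k : ℕ), Dv g ψ k 0 = 0 := by
      intro F _ _ g hg ψ hψ k
      obtain ⟨C, hC⟩ := (Dv_isBigO hg hψ k 1).bound
      simpa using hC.self_of_nhds
    rw [e0 hg.fderiv hψ.continuous, e0 hg hψ.continuous, e0 hg hd.continuous]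
    simpa using hasFDerivAt_zero_of_isBigO (Dv_isBigO hg hψ.continuous k 2)
  · have hp := nsq_pos h0
    have h1 : HasFDerivAt nsq (fderiv ℝ nsq z) z := (nsq_contDiff.differentiable (by simp) z).hasFDerivAt
    have h2 : HasFDerivAt nx (fderiv ℝ nx z) z := (nx_contDiff.differentiable (by simp) z).hasFDerivAt
    have h3 : HasFDerivAt g (fderiv ℝ g z) z := (hg.1.differentiable (by simp) z).hasFDerivAt
    have hinv : HasFDerivAt (fun y => (nsq y)⁻¹) (-(nsq z ^ 2)⁻¹ • fderiv ℝ nsq z) z :=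
      (hasDerivAt_inv hp.ne').comp_hasFDerivAt z h1
    have h4 : HasFDerivAt (fun y => (nsq y ^ k)⁻¹) (-((k:ℝ) * (nsq z ^ (k+1))⁻¹) • fderiv ℝ nsq z) z := by
      have hh := (((hasDerivAt_pow k (nsq z)).inv (by positivity))).comp_hasFDerivAt z h1
      convert! hh using 2
      rcases k with _ | k
      · simp
      · simp only [Nat.add_sub_cancel]
        field_simp
        ring
    have h5 := ((hψ.differentiable (by simp) (nx z * (nsq z)⁻¹)).hasDerivAt).comp_hasFDerivAt z (h2.mul hinv)
    have h6 := (h4.mul h5).smul h3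
    refine h6.congr_fderiv ?_
    ext v
    simp only [Dv, add_apply, smul_apply, sub_apply,
      ContinuousLinearMap.smulRight_apply, smul_eq_mul, smul_smul, ← add_smul, add_assoc, Function.comp_apply, Pi.mul_apply]
    congr 2
    field_simp
    ring

theorem Dv_contDiff_nat (n : ℕ) : ∀ {F : Type} [NormedAddCommGroup F] [NormedSpace ℝ F]
    {g : E4 → F} (_ : Fl g) {ψ : ℝ → ℝ} (_ : ContDiff ℝ ∞ ψ) (k : ℕ), ContDiff ℝ n (Dv g ψ k) := by
  induction n with
  | zero =>
    intro F _ _ g hg ψ hψ k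
    exact contDiff_zero.2 (continuous_iff_continuousAt.2 fun x =>
      (Dv_hasFDerivAt hg hψ k x).continuousAt)
  | succ n ih =>
    intro F _ _ g hg ψ hψ k
    push_cast
    rw [contDiff_succ_iff_hasFDerivAt]
    refine ⟨_, ?_, fun x => Dv_hasFDerivAt hg hψ k x⟩
    have hd : ContDiff ℝ ∞ (deriv ψ) := (contDiff_infty_iff_deriv.1 hψ).2
    have hn : ((n:ℕ∞) : WithTop ℕ∞) ≤ ∞ := by exact_mod_cast le_top
    have a1 : ContDiff ℝ n nsq := nsq_contDiff.of_le hn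
    have a2 : ContDiff ℝ n nx := nx_contDiff.of_le hn
    have a3 : ContDiff ℝ n (fderiv ℝ nsq) := (nsq_contDiff.fderiv_right (m := ∞) (by simp)).of_le hn
    have a4 : ContDiff ℝ n (fderiv ℝ nx) := (nx_contDiff.fderiv_right (m := ∞) (by simp)).of_le hn
    have b1 := ih hg.fderiv hψ k
    have b2 := ih hg hψ (k+1)
    have b3 := ih hg hd (k+2)
    exact (b1.add (a3.smulRight (contDiff_const.smul b2))).add
      (((a1.smul a4).sub (a2.smul a3)).smulRight b3)

theorem Dv_fl {g : E4 → F} (hg : Fl g) {ψ : ℝ → ℝ} (hψ : ContDiff ℝ ∞ ψ) (k : ℕ) : Fl (Dv g ψ k) :=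
  ⟨contDiff_infty.2 fun n => Dv_contDiff_nat n hg hψ k, Dv_isBigO hg hψ.continuous k⟩

end

def Px : E4 →L[ℝ] E4 :=
  ContinuousLinearMap.pi ![ContinuousLinearMap.proj 0, 0, ContinuousLinearMap.proj 2, 0]
def Py : E4 →L[ℝ] E4 :=
  ContinuousLinearMap.pi ![0, ContinuousLinearMap.proj 1, 0, ContinuousLinearMap.proj 3]

theorem Px_apply (p : E4) : Px p = ![p 0, 0, p 2, 0] := by
  ext i; fin_cases i <;> simp [Px]
theorem Py_apply (p : E4) : Py p = ![0, p 1, 0, p 3] := by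
  ext i; fin_cases i <;> simp [Py]

/-- the hyperbolic scaling `(x, ξ) ↦ (s x, s⁻¹ ξ)` -/
def Lm (s : ℝ) (p : E4) : E4 := s • Px p + s⁻¹ • Py p

theorem Lm_apply (s : ℝ) (p : E4) : Lm s p = ![s * p 0, s⁻¹ * p 1, s * p 2, s⁻¹ * p 3] := by
  ext i; fin_cases i <;> simp [Lm, Px_apply, Py_apply]

theorem Lm_Lm (s l : ℝ) (p : E4) : Lm s (Lm l p) = Lm (l * s) p := by
  simp only [Lm_apply]
  ext i; fin_cases i <;> simp <;> ring

theorem Lm_one (p : E4) : Lm 1 p = p := by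
  simp only [Lm_apply]
  ext i; fin_cases i <;> simp

section
variable {F : Type} [NormedAddCommGroup F] [NormedSpace ℝ F]

def Kc (h : E4 → F) : Prop := Fl h ∧ ∀ z : E4, 2 * nx z < z 1 ^ 2 + z 3 ^ 2 → h z = 0

theorem Kc.fderiv {h : E4 → F} (hh : Kc h) : Kc (_root_.fderiv ℝ h) := by
  refine ⟨hh.1.fderiv, fun z hz => ?_⟩
  have ho : IsOpen {z : E4 | 2 * nx z < z 1 ^ 2 + z 3 ^ 2} :=
    isOpen_lt (by have := nx_contDiff.continuous; fun_prop) (by fun_prop)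
  have : h =ᶠ[𝓝 z] fun _ => 0 := by
    filter_upwards [ho.mem_nhds hz] with y hy using hh.2 y hy
  rw [this.fderiv_eq]; simp

theorem Kc.bound {h : E4 → F} (hh : Kc h) (N : ℕ) : ∃ C ≥ 0, ∃ r > 0, ∀ (s : ℝ) (p : E4), 0 < s →
    3 * s * ‖p‖ < r → ‖h (Lm s p)‖ ≤ C * (3 * s * ‖p‖) ^ N := by
  obtain ⟨C, hC⟩ := (hh.1.2 N).bound
  obtain ⟨r, hr, hb⟩ := Metric.eventually_nhds_iff_ball.1 hC
  refine ⟨max C 0, le_max_right _ _, r, hr, fun s p hs hsp => ?_⟩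
  by_cases hc : 2 * nx (Lm s p) < (Lm s p) 1 ^ 2 + (Lm s p) 3 ^ 2
  · rw [hh.2 _ hc, norm_zero]; positivity
  · have h1 : nsq (Lm s p) ≤ 3 * nx (Lm s p) := by
      unfold nsq; unfold nx at hc ⊢; linarith
    have h2 : nx (Lm s p) = s^2 * nx p := by
      simp [nx, Lm_apply]; ring
    have h3 : nx p ≤ 2 * ‖p‖^2 := by
      have a0 := norm_le_pi_norm p 0
      have a2 := norm_le_pi_norm p 2
      rw [Real.norm_eq_abs] at a0 a2
      have b0 := sq_le_sq' (by linarith [neg_abs_le (p 0)]) ((le_abs_self _).trans a0)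
      have b2 := sq_le_sq' (by linarith [neg_abs_le (p 2)]) ((le_abs_self _).trans a2)
      unfold nx; linarith
    have h4 : ‖Lm s p‖ ≤ 3 * s * ‖p‖ := by
      refine abs_le_of_sq_le_sq' ?_ (by positivity) |>.2
      have := norm_sq_le_nsq (Lm s p)
      have h5 : s^2 * nx p ≤ s^2 * (2 * ‖p‖^2) := by gcongr
      have : 0 ≤ s^2 * ‖p‖^2 := by positivity
      nlinarith
    have := hb (Lm s p) (by simpa using lt_of_le_of_lt h4 hsp)
    simp only [norm_pow, norm_norm] at this
    exact this.trans (by gcongr; exact le_max_left _ _)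

/-- integrand -/
def Tm (h : E4 → F) (m : ℕ) (y : ℝ × E4) : F :=
  if 0 < y.1 then (y.1 ^ m)⁻¹ • h (Lm y.1 y.2) else 0

theorem Tm_bound {h : E4 → F} (hh : Kc h) (m : ℕ) (y₀ : ℝ × E4) (hy : y₀.1 ≤ 0) :
    ∃ C, ∀ᶠ y in 𝓝 y₀, ‖Tm h m y‖ ≤ C * ‖y - y₀‖ ^ 2 := by
  obtain ⟨C, hC, r, hr, hb⟩ := hh.bound (m+2)
  set R := ‖y₀.2‖ + 1 with hR
  have hR0 : 0 < R := by positivity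
  refine ⟨C * (3 * R) ^ (m+2), ?_⟩
  have e1 : ∀ᶠ y : ℝ × E4 in 𝓝 y₀, ‖y.2‖ < R :=
    (continuous_snd.norm).tendsto y₀ |>.eventually (gt_mem_nhds (by rw [hR]; linarith))
  have e2 : ∀ᶠ y : ℝ × E4 in 𝓝 y₀, y.1 < r / (3 * R) :=
    continuous_fst.tendsto y₀ |>.eventually (gt_mem_nhds (lt_of_le_of_lt hy (by positivity)))
  filter_upwards [e1, e2] with y h1 h2
  unfold Tm
  split_ifs with hpos
  · have hsp : 3 * y.1 * ‖y.2‖ < r := by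
      have : y.1 * (3 * R) < r := (lt_div_iff₀ (by positivity)).1 h2
      have : y.1 * ‖y.2‖ ≤ y.1 * R := by gcongr
      linarith
    have hs : y.1 ≤ ‖y - y₀‖ := by
      have := norm_fst_le (y - y₀)
      rw [Real.norm_eq_abs, Prod.fst_sub] at this
      have := le_abs_self (y.1 - y₀.1)
      linarith
    rw [norm_smul, Real.norm_of_nonneg (by positivity)]
    calc (y.1 ^ m)⁻¹ * ‖h (Lm y.1 y.2)‖ ≤ (y.1 ^ m)⁻¹ * (C * (3 * y.1 * ‖y.2‖) ^ (m+2)) := by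
          gcongr; exact hb _ _ hpos hsp
      _ ≤ (y.1 ^ m)⁻¹ * (C * (3 * y.1 * R) ^ (m+2)) := by gcongr
      _ = C * (3 * R) ^ (m+2) * y.1 ^ 2 := by
          rw [show 3 * y.1 * R = (3 * R) * y.1 by ring, mul_pow, pow_add y.1]; field_simp
      _ ≤ _ := by gcongr
  · simp; positivity

/-- derivative of `(s, p) ↦ s² L` -/
def Am (y : ℝ × E4) : ℝ × E4 →L[ℝ] E4 :=
  (ContinuousLinearMap.fst ℝ ℝ E4).smulRight (y.1 ^ 2 • Px y.2 - Py y.2)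
    + (y.1 ^ 3 • Px + y.1 • Py).comp (ContinuousLinearMap.snd ℝ ℝ E4)

theorem Am_contDiff : ContDiff ℝ ∞ Am := by
  unfold Am
  refine ContDiff.add (contDiff_const.smulRight ?_) (ContDiff.clm_comp ?_ contDiff_const)
  · exact (by fun_prop)
  · exact (by fun_prop)

theorem Tm_hasFDerivAt {h : E4 → F} (hh : Kc h) (m : ℕ) (y : ℝ × E4) :
    HasFDerivAt (Tm h m)
      ((Tm (fderiv ℝ h) (m+2) y).comp (Am y)
        - (ContinuousLinearMap.fst ℝ ℝ E4).smulRight ((m:ℝ) • Tm h (m+1) y)) y := by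
  rcases le_or_gt y.1 0 with hy | hy
  · have e0 : ∀ {F : Type} [NormedAddCommGroup F] [NormedSpace ℝ F] (h : E4 → F) (m : ℕ),
      Tm h m y = 0 := by
      intro F _ _ h m
      simp [Tm, not_lt.2 hy]
    rw [e0, e0]
    obtain ⟨C, hC⟩ := Tm_bound hh m y hy
    rw [hasFDerivAt_iff_isLittleO]
    simp only [e0, sub_zero, ContinuousLinearMap.zero_comp, smul_zero, ContinuousLinearMap.smulRight_zero,
      zero_apply]
    have h1 : (Tm h m) =O[𝓝 y] fun x => ‖x - y‖ ^ 2 :=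
      IsBigO.of_bound C (by filter_upwards [hC] with z hz; simpa using hz)
    exact h1.trans_isLittleO (by simpa using isLittleO_pow_sub_sub y (m := 2) (by norm_num))
  · have hev : Tm h m =ᶠ[𝓝 y] fun y => (y.1 ^ m)⁻¹ • h (Lm y.1 y.2) := by
      filter_upwards [continuous_fst.tendsto y |>.eventually (lt_mem_nhds hy)] with z hz
      simp [Tm, hz]
    refine HasFDerivAt.congr_of_eventuallyEq ?_ hev
    have hfst : HasFDerivAt (fun y : ℝ × E4 => y.1) (ContinuousLinearMap.fst ℝ ℝ E4) y := hasFDerivAt_fst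
    have h4 : HasFDerivAt (fun y : ℝ × E4 => (y.1 ^ m)⁻¹)
        (-((m:ℝ) * (y.1 ^ (m+1))⁻¹) • ContinuousLinearMap.fst ℝ ℝ E4) y := by
      have hh := (((hasDerivAt_pow m y.1).inv (by positivity))).comp_hasFDerivAt y hfst
      convert! hh using 2
      rcases m with _ | k
      · simp
      · simp only [Nat.add_sub_cancel]
        field_simp
        ring
    have hinv : HasFDerivAt (fun y : ℝ × E4 => (y.1)⁻¹) (-(y.1 ^ 2)⁻¹ • ContinuousLinearMap.fst ℝ ℝ E4) y :=
      (hasDerivAt_inv hy.ne').comp_hasFDerivAt y hfst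
    have hPx : HasFDerivAt (fun y : ℝ × E4 => Px y.2) (Px.comp (ContinuousLinearMap.snd ℝ ℝ E4)) y :=
      (Px.comp (ContinuousLinearMap.snd ℝ ℝ E4)).hasFDerivAt
    have hPy : HasFDerivAt (fun y : ℝ × E4 => Py y.2) (Py.comp (ContinuousLinearMap.snd ℝ ℝ E4)) y :=
      (Py.comp (ContinuousLinearMap.snd ℝ ℝ E4)).hasFDerivAt
    have hL : HasFDerivAt (fun y : ℝ × E4 => Lm y.1 y.2) ((y.1^2)⁻¹ • Am y) y := by
      refine ((hfst.smul hPx).add (hinv.smul hPy)).congr_fderiv ?_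
      ext v i
      all_goals
        simp [Am]
        field_simp
      all_goals try ring
    have h3 : HasFDerivAt h (fderiv ℝ h (Lm y.1 y.2)) (Lm y.1 y.2) :=
      (hh.1.1.differentiable (by simp) _).hasFDerivAt
    refine (h4.smul (h3.comp y hL)).congr_fderiv ?_
    refine ContinuousLinearMap.ext fun v => ?_
    simp only [Tm, hy, if_true, add_apply, smul_apply, sub_apply, ContinuousLinearMap.comp_apply,
      ContinuousLinearMap.smulRight_apply, smul_eq_mul, map_smul, smul_smul, Function.comp_apply]
    rw [sub_eq_add_neg, ← neg_smul]
    congr 2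
    · field_simp
      ring
    · simp; ring

theorem Tm_contDiff_nat (n : ℕ) : ∀ {F : Type} [NormedAddCommGroup F] [NormedSpace ℝ F]
    {h : E4 → F} (_ : Kc h) (m : ℕ), ContDiff ℝ n (Tm h m) := by
  induction n with
  | zero =>
    intro F _ _ h hh m
    exact contDiff_zero.2 (continuous_iff_continuousAt.2 fun x =>
      (Tm_hasFDerivAt hh m x).continuousAt)
  | succ n ih =>
    intro F _ _ h hh m
    push_cast
    rw [contDiff_succ_iff_hasFDerivAt]
    refine ⟨_, ?_, fun x => Tm_hasFDerivAt hh m x⟩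
    have hn : ((n:ℕ∞) : WithTop ℕ∞) ≤ ∞ := by exact_mod_cast le_top
    exact ((ih hh.fderiv (m+2)).clm_comp (Am_contDiff.of_le hn)).sub
      (contDiff_const.smulRight (contDiff_const.smul (ih hh (m+1))))

theorem Tm_contDiff {h : E4 → F} (hh : Kc h) (m : ℕ) : ContDiff ℝ ∞ (Tm h m) :=
  contDiff_infty.2 fun n => Tm_contDiff_nat n hh m

end

theorem X01_eq (p : E4) : X01 p = Px p - Py p := by
  rw [Px_apply, Py_apply]; unfold X01
  ext i; fin_cases i <;> simp

theorem solve_cone {h : E4 → ℝ} (hh : Kc h) :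
    ∃ f : E4 → ℝ, Fl f ∧ ∀ p, fderiv ℝ f p (X01 p) = h p := by
  have hT := Tm_contDiff hh 1
  set f : E4 → ℝ := fun p => ∫ s in (0:ℝ)..1, Tm h 1 (s, p) with hf
  have hfs : ContDiff ℝ ∞ f := contDiff_paramInt _ hT 0 1
  refine ⟨f, ⟨hfs, fun N => ?_⟩, fun p => ?_⟩
  · obtain ⟨C, hC, r, hr, hb⟩ := hh.bound (N+1)
    refine IsBigO.of_bound (C * 3 ^ (N+1)) ?_
    filter_upwards [Metric.ball_mem_nhds (0:E4) (lt_min one_pos (show 0 < r/3 by positivity))] with p hp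
    have hp' : ‖p‖ < min 1 (r/3) := by simpa using hp
    have hp1 : ‖p‖ < 1 := hp'.trans_le (min_le_left _ _)
    have hp2 : ‖p‖ < r/3 := hp'.trans_le (min_le_right _ _)
    have : ‖f p‖ ≤ C * 3 ^ (N+1) * ‖p‖ ^ N * |1 - 0| := by
      refine intervalIntegral.norm_integral_le_of_norm_le_const fun s hs => ?_
      rw [uIoc_of_le zero_le_one] at hs
      have hs0 := hs.1
      have hs1 := hs.2
      simp only [Tm, hs0, if_true, pow_one]
      rw [norm_smul, norm_inv, Real.norm_of_nonneg hs0.le]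
      have h1 : s * ‖p‖ ≤ 1 * ‖p‖ := by gcongr
      calc s⁻¹ * ‖h (Lm s p)‖ ≤ s⁻¹ * (C * (3 * s * ‖p‖) ^ (N+1)) := by
            gcongr; exact hb s p hs0 (by linarith)
        _ = C * 3 ^ (N+1) * ‖p‖ ^ N * (s ^ N * ‖p‖) := by
            rw [mul_pow, mul_pow]; field_simp; ring
        _ ≤ C * 3 ^ (N+1) * ‖p‖ ^ N * 1 := by
            gcongr
            exact mul_le_one₀ (pow_le_one₀ hs0.le hs1) (norm_nonneg _) hp1.le
        _ = _ := by ring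
    simpa using this
  · have hTc : Continuous fun s : ℝ => Tm h 1 (s, p) := hT.continuous.comp (by fun_prop)
    have h1 : ∀ l : ℝ, 0 < l → f (Lm l p) = ∫ u in (0:ℝ)..l, Tm h 1 (u, p) := by
      intro l hl
      have : ∀ s : ℝ, Tm h 1 (s, Lm l p) = l * Tm h 1 (l * s, p) := by
        intro s
        simp only [Tm, Lm_Lm, mul_pos_iff_of_pos_left hl]
        split_ifs with hs
        · simp; field_simp
        · simp
      simp only [hf, this]
      rw [intervalIntegral.integral_const_mul, intervalIntegral.mul_integral_comp_mul_left (f := fun u => Tm h 1 (u, p))]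
      simp
    have h2 : HasDerivAt (fun l : ℝ => ∫ u in (0:ℝ)..l, Tm h 1 (u, p)) (Tm h 1 (1, p)) 1 :=
      intervalIntegral.integral_hasDerivAt_right (hTc.intervalIntegrable _ _)
        (hTc.stronglyMeasurableAtFilter _ _) hTc.continuousAt
    have h3 : HasDerivAt (fun l : ℝ => Lm l p) (Px p - Py p) 1 := by
      have a := (hasDerivAt_id (1:ℝ)).smul_const (Px p)
      have b := (hasDerivAt_inv (one_ne_zero : (1:ℝ) ≠ 0)).smul_const (Py p)
      refine (a.add b).congr_deriv ?_
      simp [sub_eq_add_neg]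
    have h4 : HasDerivAt (fun l : ℝ => f (Lm l p)) (fderiv ℝ f p (X01 p)) 1 := by
      have hfd : HasFDerivAt f (fderiv ℝ f (Lm 1 p)) (Lm 1 p) :=
        (hfs.differentiable (by simp) _).hasFDerivAt
      have := hfd.comp_hasDerivAt 1 h3
      rw [← X01_eq, Lm_one] at this
      exact this
    have h5 : (fun l : ℝ => f (Lm l p)) =ᶠ[𝓝 1] fun l : ℝ => ∫ u in (0:ℝ)..l, Tm h 1 (u, p) := by
      filter_upwards [lt_mem_nhds (zero_lt_one (α := ℝ))] with l hl using h1 l hl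
    have := (h4.congr_of_eventuallyEq h5.symm).unique h2
    rw [this]
    simp [Tm, Lm_one]

/-- swap `x` and `ξ` -/
def Sw : E4 →L[ℝ] E4 :=
  ContinuousLinearMap.pi ![ContinuousLinearMap.proj 1, ContinuousLinearMap.proj 0,
    ContinuousLinearMap.proj 3, ContinuousLinearMap.proj 2]

theorem Sw_apply (p : E4) : Sw p = ![p 1, p 0, p 3, p 2] := by
  ext i; fin_cases i <;> simp [Sw]

theorem Fl.comp_clm {g : E4 → ℝ} (hg : Fl g) (L : E4 →L[ℝ] E4) : Fl (fun p => g (L p)) := by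
  refine ⟨hg.1.comp L.contDiff, fun N => ?_⟩
  have h0 : Tendsto (fun p => L p) (𝓝 0) (𝓝 0) := by
    simpa using L.continuous.tendsto 0
  have h1 := (hg.2 N).comp_tendsto h0
  refine h1.trans ?_
  refine IsBigO.of_bound (‖L‖^N) (Eventually.of_forall fun p => ?_)
  simp only [Function.comp_apply, norm_pow, norm_norm]
  rw [← mul_pow]
  gcongr
  exact L.le_opNorm p

theorem Fl.add {F : Type} [NormedAddCommGroup F] [NormedSpace ℝ F] {f g : E4 → F} (hf : Fl f) (hg : Fl g) :
    Fl (fun p => f p + g p) :=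
  ⟨hf.1.add hg.1, fun N => (hf.2 N).add (hg.2 N)⟩

theorem Fl.sub {F : Type} [NormedAddCommGroup F] [NormedSpace ℝ F] {f g : E4 → F} (hf : Fl f) (hg : Fl g) :
    Fl (fun p => f p - g p) :=
  ⟨hf.1.sub hg.1, fun N => (hf.2 N).sub (hg.2 N)⟩

theorem solve_X1 {g : E4 → ℝ} (hg : Fl g) :
    ∃ f : E4 → ℝ, Fl f ∧ ∀ p, fderiv ℝ f p (X01 p) = g p := by
  let ψ : ℝ → ℝ := fun r => Real.smoothTransition (6 * r - 5/2)
  have hψ : ContDiff ℝ ∞ ψ := Real.smoothTransition.contDiff.comp (by fun_prop)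
  have hψ' : ContDiff ℝ ∞ (fun r => 1 - ψ r) := contDiff_const.sub hψ
  have k1 : Kc (Dv g ψ 0) := by
    refine ⟨Dv_fl hg hψ 0, fun z hz => ?_⟩
    have hp : 0 < nsq z := by unfold nsq; unfold nx at hz; nlinarith [sq_nonneg (z 0), sq_nonneg (z 2)]
    have : ψ (nx z * (nsq z)⁻¹) = 0 := by
      apply Real.smoothTransition.zero_of_nonpos
      have : nx z * (nsq z)⁻¹ ≤ 1/3 := by
        rw [← div_eq_mul_inv, div_le_iff₀ hp]
        unfold nsq; unfold nx at hz ⊢; linarith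
      linarith
    simp [Dv, this]
  have k2 : Kc (fun p => Dv g (fun r => 1 - ψ r) 0 (Sw p)) := by
    refine ⟨(Dv_fl hg hψ' 0).comp_clm Sw, fun z hz => ?_⟩
    have hp : 0 < nsq (Sw z) := by
      simp only [nsq, Sw_apply]; unfold nx at hz; simp; nlinarith [sq_nonneg (z 0), sq_nonneg (z 2)]
    have : ψ (nx (Sw z) * (nsq (Sw z))⁻¹) = 1 := by
      apply Real.smoothTransition.one_of_one_le
      have : 2/3 ≤ nx (Sw z) * (nsq (Sw z))⁻¹ := by
        rw [← div_eq_mul_inv, le_div_iff₀ hp]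
        simp only [nsq, nx, Sw_apply]; unfold nx at hz; simp; linarith
      linarith
    simp [Dv, this]
  obtain ⟨f1, hf1, e1⟩ := solve_cone k1
  obtain ⟨f2, hf2, e2⟩ := solve_cone k2
  refine ⟨fun p => f1 p - f2 (Sw p), hf1.sub (hf2.comp_clm Sw), fun p => ?_⟩
  have d1 : HasFDerivAt f1 (fderiv ℝ f1 p) p := (hf1.1.differentiable (by simp) _).hasFDerivAt
  have d2 : HasFDerivAt f2 (fderiv ℝ f2 (Sw p)) (Sw p) := (hf2.1.differentiable (by simp) _).hasFDerivAt
  have d3 := d1.sub (d2.comp p Sw.hasFDerivAt)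
  have d4 : HasFDerivAt (fun p => f1 p - f2 (Sw p)) _ p := d3
  rw [d4.fderiv]
  have hS : Sw (X01 p) = - X01 (Sw p) := by
    simp only [Sw_apply, X01]
    ext i; fin_cases i <;> simp
  have hSS : Sw (Sw p) = p := by
    simp only [Sw_apply]
    ext i; fin_cases i <;> simp
  simp only [sub_apply, ContinuousLinearMap.comp_apply, hS, map_neg, e1, e2, hSS]
  simp only [Dv, smul_eq_mul]; ring

/-- the primitive given by the Poincaré lemma -/
def muF (σ : E4 → E4 →L[ℝ] E4 →L[ℝ] ℝ) (p : E4) : E4 →L[ℝ] ℝ :=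
  ∫ t in (0:ℝ)..1, t • σ (t • p) p

theorem muG_contDiff {σ : E4 → E4 →L[ℝ] E4 →L[ℝ] ℝ} (hσ : ContDiff ℝ ∞ σ) :
    ContDiff ℝ ∞ (fun y : ℝ × E4 => y.1 • σ (y.1 • y.2) y.2) := by
  have : ContDiff ℝ ∞ (fun y : ℝ × E4 => σ (y.1 • y.2)) := hσ.comp (by fun_prop)
  exact contDiff_fst.smul (this.clm_apply contDiff_snd)

theorem muF_fl {σ : E4 → E4 →L[ℝ] E4 →L[ℝ] ℝ} (hσ : Fl σ) : Fl (muF σ) := by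
  refine ⟨contDiff_paramInt _ (muG_contDiff hσ.1) 0 1, fun N => ?_⟩
  obtain ⟨C, hC⟩ := (hσ.2 N).bound
  obtain ⟨r, hr, hb⟩ := Metric.eventually_nhds_iff_ball.1 hC
  refine IsBigO.of_bound (max C 0) ?_
  filter_upwards [Metric.ball_mem_nhds (0:E4) (lt_min one_pos hr)] with p hp
  have hp' : ‖p‖ < min 1 r := by simpa using hp
  have hp1 : ‖p‖ < 1 := hp'.trans_le (min_le_left _ _)
  have hp2 : ‖p‖ < r := hp'.trans_le (min_le_right _ _)
  simp only [norm_pow, norm_norm]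
  have : ‖muF σ p‖ ≤ max C 0 * ‖p‖ ^ N * |1 - 0| := by
    refine intervalIntegral.norm_integral_le_of_norm_le_const fun t ht => ?_
    rw [uIoc_of_le zero_le_one] at ht
    have ht0 := ht.1.le
    have ht1 := ht.2
    have hn : ‖t • p‖ ≤ ‖p‖ := by
      rw [norm_smul, Real.norm_of_nonneg ht0]
      exact mul_le_of_le_one_left (norm_nonneg _) ht1
    rw [norm_smul, Real.norm_of_nonneg ht0]
    have h1 := hb (t • p) (by simpa using lt_of_le_of_lt hn hp2)
    simp only [norm_pow, norm_norm] at h1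
    calc t * ‖σ (t • p) p‖ ≤ 1 * (‖σ (t • p)‖ * ‖p‖) := by
          gcongr; exact (σ (t • p)).le_opNorm p
      _ ≤ 1 * (‖σ (t • p)‖ * 1) := by gcongr
      _ = ‖σ (t • p)‖ := by ring
      _ ≤ C * ‖t • p‖ ^ N := h1
      _ ≤ max C 0 * ‖t • p‖ ^ N := by gcongr; exact le_max_left _ _
      _ ≤ max C 0 * ‖p‖ ^ N := by gcongr
  simpa using this

theorem muF_fderiv {σ : E4 → E4 →L[ℝ] E4 →L[ℝ] ℝ} (hσ : ContDiff ℝ ∞ σ) (p u v : E4) :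
    fderiv ℝ (muF σ) p u v =
      ∫ t in (0:ℝ)..1, t * (t * fderiv ℝ σ (t • p) u p v + σ (t • p) u v) := by
  have hG := muG_contDiff hσ
  have hG1 : ContDiff ℝ 1 (fun y : ℝ × E4 => y.1 • σ (y.1 • y.2) y.2) :=
    hG.of_le (by exact_mod_cast le_top)
  have h1 := (hasFDerivAt_paramInt _ hG1 0 1 p).fderiv
  have h2 : fderiv ℝ (muF σ) p = _ := h1
  have hc : Continuous fun t : ℝ => (fderiv ℝ (fun y : ℝ × E4 => y.1 • σ (y.1 • y.2) y.2) (t, p)).comp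
      (ContinuousLinearMap.inr ℝ ℝ E4) :=
    ((hG1.continuous_fderiv (by simp)).comp (by fun_prop)).clm_comp continuous_const
  rw [h2, ContinuousLinearMap.intervalIntegral_apply (hc.intervalIntegrable _ _),
    ContinuousLinearMap.intervalIntegral_apply ((hc.clm_apply continuous_const).intervalIntegrable _ _)]
  refine intervalIntegral.integral_congr fun t _ => ?_
  -- derivative in p for fixed t
  have hd1 : HasFDerivAt (fun q : E4 => t • σ (t • q) q)
      ((fderiv ℝ (fun y : ℝ × E4 => y.1 • σ (y.1 • y.2) y.2) (t, p)).comp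
        (ContinuousLinearMap.inr ℝ ℝ E4)) p :=
    ((hG.differentiable (by simp)) (t, p)).hasFDerivAt.comp p (hasFDerivAt_prodMk_right t p)
  have hσd : HasFDerivAt σ (fderiv ℝ σ (t • p)) (t • p) := (hσ.differentiable (by simp) _).hasFDerivAt
  have hsm : HasFDerivAt (fun q : E4 => t • q) (t • ContinuousLinearMap.id ℝ E4) p :=
    (hasFDerivAt_id p).const_smul t
  have hc1 : HasFDerivAt (fun q : E4 => σ (t • q))
      ((fderiv ℝ σ (t • p)).comp (t • ContinuousLinearMap.id ℝ E4)) p :=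
    HasFDerivAt.comp (g := σ) p hσd hsm
  have hd2 := (hc1.clm_apply (hasFDerivAt_id p)).const_smul t
  have := hd1.unique hd2
  beta_reduce
  rw [this]
  simp
  ring

theorem muF_closed {σ : E4 → E4 →L[ℝ] E4 →L[ℝ] ℝ} (hσ : ContDiff ℝ ∞ σ) (r : ℝ)
    (hcl : ∀ p ∈ Metric.ball (0:E4) r, ∀ u v w, fderiv ℝ σ p u v w + fderiv ℝ σ p v w u
      + fderiv ℝ σ p w u v = 0)
    (halt : ∀ p ∈ Metric.ball (0:E4) r, ∀ u v, σ p u v = - σ p v u)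
    (p : E4) (hp : p ∈ Metric.ball (0:E4) r) (u v : E4) :
    fderiv ℝ (muF σ) p u v - fderiv ℝ (muF σ) p v u = σ p u v := by
  have hcσ : ∀ a b : E4, Continuous fun t : ℝ => σ (t • p) a b := fun a b =>
    ((hσ.continuous.comp (by fun_prop)).clm_apply continuous_const).clm_apply continuous_const
  have hcd : ∀ a b c : E4, Continuous fun t : ℝ => fderiv ℝ σ (t • p) a b c := fun a b c =>
    ((((hσ.continuous_fderiv (by simp)).comp (by fun_prop)).clm_apply
      continuous_const).clm_apply continuous_const).clm_apply continuous_const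
  have haltd : ∀ q ∈ Metric.ball (0:E4) r, ∀ w a b, fderiv ℝ σ q w a b = - fderiv ℝ σ q w b a := by
    intro q hq w a b
    have hσd : HasFDerivAt σ (fderiv ℝ σ q) q := (hσ.differentiable (by simp) _).hasFDerivAt
    have d : ∀ a b, HasFDerivAt (fun q => σ q a b) _ q := fun a b =>
      (hσd.clm_apply (hasFDerivAt_const a q)).clm_apply (hasFDerivAt_const b q)
    have he : (fun q => σ q a b) =ᶠ[𝓝 q] fun q => -(σ q b a) := by
      filter_upwards [Metric.isOpen_ball.mem_nhds hq] with y hy using halt y hy a b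
    have := ((d a b).congr_of_eventuallyEq he.symm).unique (d b a).neg
    have := DFunLike.congr_fun this w
    simpa using this
  rw [muF_fderiv hσ, muF_fderiv hσ, ← intervalIntegral.integral_sub]
  rotate_left
  · exact Continuous.intervalIntegrable (continuous_id.mul ((continuous_id.mul (hcd u p v)).add (hcσ u v))) _ _
  · exact Continuous.intervalIntegrable (continuous_id.mul ((continuous_id.mul (hcd v p u)).add (hcσ v u))) _ _
  have hderiv : ∀ t : ℝ, HasDerivAt (fun t : ℝ => t ^ 2 * σ (t • p) u v)
      (2 * t * σ (t • p) u v + t ^ 2 * fderiv ℝ σ (t • p) p u v) t := by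
    intro t
    have hσd : HasFDerivAt σ (fderiv ℝ σ (t • p)) (t • p) := (hσ.differentiable (by simp) _).hasFDerivAt
    have hs : HasDerivAt (fun t : ℝ => t • p) p t := by
      simpa using (hasDerivAt_id t).smul_const p
    have h1 : HasDerivAt (fun t : ℝ => σ (t • p)) (fderiv ℝ σ (t • p) p) t :=
      HasFDerivAt.comp_hasDerivAt (l := σ) t hσd hs
    have h2 := (h1.clm_apply (hasDerivAt_const t u)).clm_apply (hasDerivAt_const t v)
    have h3 := (hasDerivAt_pow 2 t).mul h2
    refine h3.congr_deriv ?_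
    simp
  have hFTC := intervalIntegral.integral_eq_sub_of_hasDerivAt (a := 0) (b := 1)
    (fun t _ => hderiv t) (Continuous.intervalIntegrable 
      (((continuous_const.mul continuous_id).mul (hcσ u v)).add ((continuous_pow 2).mul (hcd p u v))) _ _)
  simp only [one_pow, one_smul, one_mul, ne_eq, OfNat.ofNat_ne_zero, not_false_eq_true, zero_pow,
    zero_mul, sub_zero] at hFTC
  rw [← hFTC]
  refine intervalIntegral.integral_congr fun t ht => ?_
  rw [uIcc_of_le zero_le_one] at ht
  have hq : t • p ∈ Metric.ball (0:E4) r := by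
    simp only [Metric.mem_ball, dist_zero_right] at hp ⊢
    rw [norm_smul, Real.norm_of_nonneg ht.1]
    exact lt_of_le_of_lt (mul_le_of_le_one_left (norm_nonneg _) ht.2) hp
  have c1 := hcl _ hq u v p
  have c2 := haltd _ hq u v p
  have c3 := halt _ hq u v
  beta_reduce
  linear_combination (-t^2) * c1 + t^2 * c2 - t * c3

/-- multiplication by `i`, as a continuous linear map -/
def JL : E4 →L[ℝ] E4 :=
  LinearMap.toContinuousLinearMap
    { toFun := fun p => ![-(p 2), -(p 3), p 0, p 1]
      map_add' := fun p q => by ext i; fin_cases i <;> simp <;> ring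
      map_smul' := fun c p => by ext i; fin_cases i <;> simp }

theorem JL_apply (p : E4) : JL p = ![-(p 2), -(p 3), p 0, p 1] := rfl

theorem JL_X02 (p : E4) : X02 p = JL p := rfl
theorem JL_Jmul (p : E4) : Jmul p = JL p := rfl

theorem JL_JL (p : E4) : JL (JL p) = -p := by
  ext i; fin_cases i <;> simp [JL_apply]

theorem JL_norm_le (p : E4) : ‖JL p‖ ≤ ‖p‖ := by
  refine (pi_norm_le_iff_of_nonneg (norm_nonneg _)).2 fun i => ?_
  fin_cases i
  · simpa [JL_apply] using norm_le_pi_norm p 2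
  · simpa [JL_apply] using norm_le_pi_norm p 3
  · simpa [JL_apply] using norm_le_pi_norm p 0
  · simpa [JL_apply] using norm_le_pi_norm p 1

/-- rotation -/
def Rot (t : ℝ) (p : E4) : E4 := Real.cos t • p + Real.sin t • JL p

theorem Rot_norm_le (t : ℝ) (p : E4) : ‖Rot t p‖ ≤ 2 * ‖p‖ := by
  have h1 : ‖Real.cos t • p‖ ≤ ‖p‖ := by
    rw [norm_smul]
    exact mul_le_of_le_one_left (norm_nonneg _) (Real.abs_cos_le_one t)
  have h2 : ‖Real.sin t • JL p‖ ≤ ‖p‖ := by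
    rw [norm_smul]
    exact (mul_le_of_le_one_left (norm_nonneg _) (Real.abs_sin_le_one t)).trans (JL_norm_le p)
  calc _ ≤ _ := norm_add_le _ _
    _ ≤ _ := by linarith

theorem Rot_zero (p : E4) : Rot 0 p = p := by simp [Rot]
theorem Rot_two_pi (p : E4) : Rot (2 * Real.pi) p = p := by simp [Rot]

theorem Rot_JL (t : ℝ) (p : E4) : Rot t (JL p) = JL (Rot t p) := by simp [Rot]

theorem Rot_hasDerivAt (t : ℝ) (p : E4) : HasDerivAt (fun t => Rot t p) (JL (Rot t p)) t := by
  have h1 := (Real.hasDerivAt_cos t).smul_const p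
  have h2 := (Real.hasDerivAt_sin t).smul_const (JL p)
  refine (h1.add h2).congr_deriv ?_
  simp [Rot, JL_JL, add_comm]

theorem Rot_X01 (t : ℝ) (p : E4) : Rot t (X01 p) = X01 (Rot t p) := by
  ext i; fin_cases i <;> simp [Rot, X01, JL_apply] <;> ring

theorem Rot_contDiff : ContDiff ℝ ∞ (fun y : ℝ × E4 => Rot y.1 y.2) := by
  unfold Rot
  exact ((Real.contDiff_cos.comp contDiff_fst).smul contDiff_snd).add
    ((Real.contDiff_sin.comp contDiff_fst).smul (JL.contDiff.comp contDiff_snd))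

theorem Rot_hasFDerivAt (t : ℝ) (p : E4) :
    HasFDerivAt (fun q => Rot t q) (Real.cos t • ContinuousLinearMap.id ℝ E4 + Real.sin t • JL) p :=
  ((hasFDerivAt_id p).const_smul (Real.cos t)).add (JL.hasFDerivAt.const_smul (Real.sin t))

/-- averaging operator -/
def avF (g : E4 → ℝ) (p : E4) : ℝ := ∫ t in (0:ℝ)..(2 * Real.pi), t * g (Rot t p)

theorem avG_contDiff {g : E4 → ℝ} (hg : ContDiff ℝ ∞ g) :
    ContDiff ℝ ∞ (fun y : ℝ × E4 => y.1 * g (Rot y.1 y.2)) :=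
  contDiff_fst.mul (hg.comp Rot_contDiff)

theorem avF_fl {g : E4 → ℝ} (hg : Fl g) : Fl (avF g) := by
  refine ⟨contDiff_paramInt _ (avG_contDiff hg.1) 0 _, fun N => ?_⟩
  obtain ⟨C, hC⟩ := (hg.2 N).bound
  obtain ⟨r, hr, hb⟩ := Metric.eventually_nhds_iff_ball.1 hC
  refine IsBigO.of_bound ((2 * Real.pi) * (max C 0 * 2 ^ N) * |2 * Real.pi - 0|) ?_
  filter_upwards [Metric.ball_mem_nhds (0:E4) (half_pos hr)] with p hp
  have hp' : ‖p‖ < r / 2 := by simpa using hp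
  simp only [norm_pow, norm_norm]
  have : ‖avF g p‖ ≤ (2 * Real.pi) * (max C 0 * (2 * ‖p‖) ^ N) * |2 * Real.pi - 0| := by
    refine intervalIntegral.norm_integral_le_of_norm_le_const fun t ht => ?_
    rw [uIoc_of_le (by positivity)] at ht
    have ht0 := ht.1.le
    have hn := Rot_norm_le t p
    have h1 := hb (Rot t p) (by simpa using lt_of_le_of_lt hn (by linarith))
    simp only [norm_pow, norm_norm] at h1
    rw [norm_mul, Real.norm_of_nonneg ht0]
    refine mul_le_mul ht.2 ?_ (norm_nonneg _) (by positivity)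
    calc _ ≤ _ := h1
      _ ≤ max C 0 * ‖Rot t p‖ ^ N := by gcongr; exact le_max_left _ _
      _ ≤ _ := by gcongr
  refine this.trans (le_of_eq ?_)
  rw [mul_pow]; ring

theorem avF_fderiv {g : E4 → ℝ} (hg : ContDiff ℝ ∞ g) (p u : E4) :
    fderiv ℝ (avF g) p u =
      ∫ t in (0:ℝ)..(2 * Real.pi), t * fderiv ℝ g (Rot t p) (Rot t u) := by
  have hG := avG_contDiff hg
  have hG1 : ContDiff ℝ 1 (fun y : ℝ × E4 => y.1 * g (Rot y.1 y.2)) :=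
    hG.of_le (by exact_mod_cast le_top)
  have h2 : fderiv ℝ (avF g) p = _ := (hasFDerivAt_paramInt _ hG1 0 (2 * Real.pi) p).fderiv
  have hc : Continuous fun t : ℝ => (fderiv ℝ (fun y : ℝ × E4 => y.1 * g (Rot y.1 y.2)) (t, p)).comp
      (ContinuousLinearMap.inr ℝ ℝ E4) :=
    ((hG1.continuous_fderiv (by simp)).comp (by fun_prop)).clm_comp continuous_const
  rw [h2, ContinuousLinearMap.intervalIntegral_apply (hc.intervalIntegrable _ _)]
  refine intervalIntegral.integral_congr fun t _ => ?_
  have hd1 : HasFDerivAt (fun q : E4 => t * g (Rot t q))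
      ((fderiv ℝ (fun y : ℝ × E4 => y.1 * g (Rot y.1 y.2)) (t, p)).comp
        (ContinuousLinearMap.inr ℝ ℝ E4)) p :=
    ((hG.differentiable (by simp)) (t, p)).hasFDerivAt.comp p (hasFDerivAt_prodMk_right t p)
  have hgd : HasFDerivAt g (fderiv ℝ g (Rot t p)) (Rot t p) :=
    (hg.differentiable (by simp) _).hasFDerivAt
  have hc1 : HasFDerivAt (fun q : E4 => g (Rot t q)) _ p :=
    HasFDerivAt.comp (g := g) p hgd (Rot_hasFDerivAt t p)
  have := hd1.unique (hc1.const_mul t)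
  beta_reduce
  rw [this]
  simp [Rot]
  ring

theorem comp_Rot_hasDerivAt {g : E4 → ℝ} (hg : ContDiff ℝ ∞ g) (p : E4) (t : ℝ) :
    HasDerivAt (fun t => g (Rot t p)) (fderiv ℝ g (Rot t p) (JL (Rot t p))) t :=
  HasFDerivAt.comp_hasDerivAt (l := g) t (hg.differentiable (by simp) _).hasFDerivAt
    (Rot_hasDerivAt t p)

theorem Rot_continuous (p : E4) : Continuous fun t => Rot t p :=
  by unfold Rot; fun_prop

theorem fderiv_Rot_continuous {g : E4 → ℝ} (hg : ContDiff ℝ ∞ g) (p : E4) :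
    Continuous fun t => fderiv ℝ g (Rot t p) (JL (Rot t p)) :=
  ((hg.continuous_fderiv (by simp)).comp (Rot_continuous p)).clm_apply
    (JL.continuous.comp (Rot_continuous p))

theorem solve_X2 {g : E4 → ℝ} (hg : Fl g) {r : ℝ}
    (hX1 : ∀ p ∈ Metric.ball (0:E4) r, fderiv ℝ g p (X01 p) = 0)
    (hav : ∀ p ∈ Metric.ball (0:E4) r, ∫ t in (0:ℝ)..(2 * Real.pi), g (Rot t p) = 0) :
    ∃ f : E4 → ℝ, Fl f ∧ (∀ p ∈ Metric.ball (0:E4) (r / 2), fderiv ℝ f p (X01 p) = 0) ∧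
      ∀ p ∈ Metric.ball (0:E4) (r / 2), fderiv ℝ f p (JL p) = g p := by
  have hfl := avF_fl hg
  refine ⟨fun p => (2 * Real.pi)⁻¹ * avF g p, ⟨contDiff_const.mul hfl.1, fun N =>
    (hfl.2 N).const_mul_left _⟩, fun p hp => ?_, fun p hp => ?_⟩
  · rw [fderiv_const_mul (hfl.1.differentiable (by simp) _), smul_apply, avF_fderiv hg.1]
    have : ∫ t in (0:ℝ)..(2 * Real.pi), t * fderiv ℝ g (Rot t p) (Rot t (X01 p)) =
        ∫ t in (0:ℝ)..(2 * Real.pi), 0 := by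
      refine intervalIntegral.integral_congr fun t _ => ?_
      beta_reduce
      rw [Rot_X01, hX1, mul_zero]
      have := Rot_norm_le t p
      simp at hp ⊢; linarith
    rw [this]; simp
  · have hp2 : p ∈ Metric.ball (0:E4) r := by
      have := norm_nonneg p
      simp at hp ⊢; linarith
    rw [fderiv_const_mul (hfl.1.differentiable (by simp) _), smul_apply, avF_fderiv hg.1]
    have hib := intervalIntegral.integral_mul_deriv_eq_deriv_mul (a := 0) (b := 2 * Real.pi)
      (u := fun t => t) (v := fun t => g (Rot t p)) (u' := fun _ => 1)
      (v' := fun t => fderiv ℝ g (Rot t p) (JL (Rot t p)))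
      (fun t _ => hasDerivAt_id t) (fun t _ => comp_Rot_hasDerivAt hg.1 p t)
      (continuous_const.intervalIntegrable _ _)
      ((fderiv_Rot_continuous hg.1 p).intervalIntegrable _ _)
    simp only [Rot_JL]
    rw [hib]
    simp only [one_mul, hav p hp2, Rot_two_pi]
    have := Real.pi_pos
    simp
    field_simp

/-- polar coordinates on the unit disc -/
theorem polar_disc {h : ℂ → ℝ} (hh : Continuous h) :
    ∫ ζ in Metric.closedBall (0:ℂ) 1, h ζ = ∫ θ in (0:ℝ)..(2 * Real.pi), ∫ t in (0:ℝ)..1,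
      t * h ((t : ℂ) * ((Real.cos θ : ℂ) + (Real.sin θ : ℂ) * Complex.I)) := by
  set k : ℝ × ℝ → ℝ := fun y =>
    y.1 * h ((y.1 : ℂ) * ((Real.cos y.2 : ℂ) + (Real.sin y.2 : ℂ) * Complex.I)) with hk
  have hkc : Continuous k := by
    refine continuous_fst.mul (hh.comp ?_)
    fun_prop
  have hkInt : IntegrableOn k (Ioc (0:ℝ) 1 ×ˢ Ioo (-Real.pi) Real.pi)
      ((volume : Measure ℝ).prod (volume : Measure ℝ)) := by
    have : IntegrableOn k (Icc (0:ℝ) 1 ×ˢ Icc (-Real.pi) Real.pi)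
        ((volume : Measure ℝ).prod (volume : Measure ℝ)) :=
      hkc.continuousOn.integrableOn_compact (isCompact_Icc.prod isCompact_Icc)
    exact this.mono_set (prod_mono Ioc_subset_Icc_self Ioo_subset_Icc_self)
  rw [← integral_indicator measurableSet_closedBall, ← Complex.integral_comp_polarCoord_symm]
  have e1 : ∫ p in polarCoord.target,
      p.1 • (Metric.closedBall (0:ℂ) 1).indicator h (Complex.polarCoord.symm p) =
      ∫ p in polarCoord.target, (Ioc (0:ℝ) 1 ×ˢ Ioo (-Real.pi) Real.pi).indicator k p := by
    refine setIntegral_congr_fun polarCoord.open_target.measurableSet fun p hp => ?_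
    have hp' : 0 < p.1 ∧ -Real.pi < p.2 ∧ p.2 < Real.pi := by
      simpa [polarCoord_target] using hp
    have hn := Complex.norm_polarCoord_symm p
    rw [abs_of_pos hp'.1] at hn
    by_cases h1 : p.1 ≤ 1
    · rw [indicator_of_mem, indicator_of_mem, Complex.polarCoord_symm_apply]
      · rfl
      · exact ⟨⟨hp'.1, h1⟩, hp'.2⟩
      · simpa only [Metric.mem_closedBall, dist_zero_right, hn] using h1
    · rw [indicator_of_notMem, indicator_of_notMem, smul_zero]
      · exact fun hm => h1 hm.1.2
      · simpa only [Metric.mem_closedBall, dist_zero_right, hn] using h1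
  rw [e1, setIntegral_indicator (measurableSet_Ioc.prod measurableSet_Ioo)]
  have e2 : polarCoord.target ∩ (Ioc (0:ℝ) 1 ×ˢ Ioo (-Real.pi) Real.pi) =
      Ioc (0:ℝ) 1 ×ˢ Ioo (-Real.pi) Real.pi := by
    refine inter_eq_right.2 ?_
    rw [polarCoord_target]
    exact prod_mono (fun x hx => hx.1) subset_rfl
  rw [e2, Measure.volume_eq_prod, ← Measure.prod_restrict, integral_prod_symm _ (by
    rw [Measure.prod_restrict]; exact hkInt)]
  rw [← integral_Ioc_eq_integral_Ioo, ← intervalIntegral.integral_of_le (by linarith [Real.pi_pos])]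
  have hper : Function.Periodic (fun θ : ℝ => ∫ t in Ioc (0:ℝ) 1, k (t, θ)) (2 * Real.pi) := by
    intro θ
    simp only [hk, Real.cos_add_two_pi, Real.sin_add_two_pi]
  have e3 := hper.intervalIntegral_add_eq (-Real.pi) 0
  rw [show -Real.pi + 2 * Real.pi = Real.pi by ring, zero_add] at e3
  rw [e3]
  refine intervalIntegral.integral_congr fun θ _ => ?_
  beta_reduce
  rw [intervalIntegral.integral_of_le zero_le_one]

theorem discMap_polar (p : E4) (t θ : ℝ) :
    discMap p ((t : ℂ) * ((Real.cos θ : ℂ) + (Real.sin θ : ℂ) * Complex.I)) = t • Rot θ p := by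
  have h1 : ((t : ℂ) * ((Real.cos θ : ℂ) + (Real.sin θ : ℂ) * Complex.I)).re = t * Real.cos θ := by
    simp [Complex.cos_ofReal_re]
  have h2 : ((t : ℂ) * ((Real.cos θ : ℂ) + (Real.sin θ : ℂ) * Complex.I)).im = t * Real.sin θ := by
    simp [Complex.sin_ofReal_re]
  unfold discMap
  rw [h1, h2]
  ext i; fin_cases i <;> simp [Rot, JL_apply, Matrix.vecHead, Matrix.vecTail] <;> ring

theorem discMap_continuous (p : E4) : Continuous (discMap p) := by
  unfold discMap
  refine continuous_pi fun i => ?_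
  fin_cases i <;> simp <;> fun_prop

theorem alt_Rot {b : E4 →L[ℝ] E4 →L[ℝ] ℝ} (halt : ∀ u v, b u v = - b v u) (θ : ℝ) (p : E4) :
    b (Rot θ p) (JL (Rot θ p)) = b p (JL p) := by
  have h1 : b p p = 0 := by linarith [halt p p]
  have h2 : b (JL p) (JL p) = 0 := by linarith [halt (JL p) (JL p)]
  have h3 := halt (JL p) p
  simp only [Rot, map_add, map_smul, add_apply, smul_apply, smul_eq_mul, JL_JL, map_neg, h1, h2, h3]
  linear_combination b p (JL p) * Real.cos_sq_add_sin_sq θ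

theorem muF_disc {σ : E4 → E4 →L[ℝ] E4 →L[ℝ] ℝ} (hσ : ContDiff ℝ ∞ σ) (r : ℝ)
    (halt : ∀ p ∈ Metric.ball (0:E4) r, ∀ u v, σ p u v = - σ p v u) (p : E4)
    (hp : p ∈ Metric.ball (0:E4) (r / 2))
    (hd : ∫ ζ in Metric.closedBall (0:ℂ) 1, σ (discMap p ζ) p (JL p) = 0) :
    ∫ θ in (0:ℝ)..(2 * Real.pi), muF σ (Rot θ p) (JL (Rot θ p)) = 0 := by
  have hc : Continuous fun ζ : ℂ => σ (discMap p ζ) p (JL p) :=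
    ((hσ.continuous.comp (discMap_continuous p)).clm_apply continuous_const).clm_apply
      continuous_const
  rw [polar_disc hc] at hd
  refine Eq.trans ?_ hd
  refine intervalIntegral.integral_congr fun θ _ => ?_
  beta_reduce
  have hc2 : Continuous fun t : ℝ => t • σ (t • Rot θ p) (Rot θ p) :=
    continuous_id.smul ((hσ.continuous.comp (by fun_prop)).clm_apply continuous_const)
  rw [muF, ContinuousLinearMap.intervalIntegral_apply (hc2.intervalIntegrable _ _)]
  refine intervalIntegral.integral_congr fun t ht => ?_
  rw [uIcc_of_le zero_le_one] at ht
  beta_reduce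
  rw [discMap_polar, smul_apply, smul_eq_mul]
  congr 1
  refine alt_Rot (halt _ ?_) θ p
  have h1 := Rot_norm_le θ p
  have h2 : ‖t • Rot θ p‖ ≤ ‖Rot θ p‖ := by
    rw [norm_smul, Real.norm_of_nonneg ht.1]
    exact mul_le_of_le_one_left (norm_nonneg _) ht.2
  simp at hp ⊢
  linarith

theorem fderiv_vec {μ : E4 → E4 →L[ℝ] ℝ} (hμ : ContDiff ℝ ∞ μ) (A : E4 →L[ℝ] E4) (p u : E4) :
    fderiv ℝ (fun q => μ q (A q)) p u = fderiv ℝ μ p u (A p) + μ p (A u) := by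
  have hd : HasFDerivAt μ (fderiv ℝ μ p) p := (hμ.differentiable (by simp) _).hasFDerivAt
  have := (hd.clm_apply (A.hasFDerivAt (x := p))).fderiv
  rw [this]
  simp
  ring

theorem Fl.vec {μ : E4 → E4 →L[ℝ] ℝ} (hμ : Fl μ) (A : E4 →L[ℝ] E4) : Fl (fun q => μ q (A q)) := by
  refine ⟨hμ.1.clm_apply A.contDiff, fun N => ?_⟩
  have h1 : (fun q => μ q (A q)) =O[𝓝 0] fun q => ‖q‖ ^ N * (1:ℝ) := by
    have hA : (fun q => A q) =O[𝓝 0] (fun _ : E4 => (1:ℝ)) :=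
      A.continuous.continuousAt.isBigO_one ℝ
    refine IsBigO.trans (IsBigO.of_bound 1 (Eventually.of_forall fun q => ?_))
      ((hμ.2 N).norm_left.mul hA.norm_left)
    rw [one_mul, norm_mul, norm_norm, norm_norm]
    exact (μ q).le_opNorm _
  simpa using h1

theorem fderiv_symm {f : E4 → ℝ} (hf : ContDiff ℝ ∞ f) (p u v : E4) :
    fderiv ℝ (fderiv ℝ f) p u v = fderiv ℝ (fderiv ℝ f) p v u := by
  have : IsSymmSndFDerivAt ℝ f p := hf.contDiffAt.isSymmSndFDerivAt (by
    simp only [minSmoothness_of_isRCLikeNormedField]; exact WithTop.coe_le_coe.2 le_top)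
  exact this u v

theorem fderiv_sub_closed {μ : E4 → E4 →L[ℝ] ℝ} (hμ : ContDiff ℝ ∞ μ) {f : E4 → ℝ}
    (hf : ContDiff ℝ ∞ f) (p u v : E4) :
    fderiv ℝ (fun q => μ q - fderiv ℝ f q) p u v - fderiv ℝ (fun q => μ q - fderiv ℝ f q) p v u
      = fderiv ℝ μ p u v - fderiv ℝ μ p v u := by
  have hf' : ContDiff ℝ ∞ (fderiv ℝ f) := hf.fderiv_right (by simp)
  have h1 : fderiv ℝ (fun q => μ q - fderiv ℝ f q) p = fderiv ℝ μ p - fderiv ℝ (fderiv ℝ f) p :=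
    fderiv_fun_sub (hμ.differentiable (by simp) _) (hf'.differentiable (by simp) _)
  rw [h1]
  have := fderiv_symm hf p u v
  simp only [sub_apply]
  linarith

theorem X01_JL (p : E4) : X01 (JL p) = JL (X01 p) := by
  ext i; fin_cases i <;> simp [X01, JL_apply]

theorem exists_primitive {σ : E4 → E4 →L[ℝ] E4 →L[ℝ] ℝ} (hσ : Fl σ) {r : ℝ} (hr : 0 < r)
    (hcl : ∀ p ∈ Metric.ball (0:E4) r, ∀ u v w, fderiv ℝ σ p u v w + fderiv ℝ σ p v w u
      + fderiv ℝ σ p w u v = 0)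
    (halt : ∀ p ∈ Metric.ball (0:E4) r, ∀ u v, σ p u v = - σ p v u)
    (hlag : ∀ p ∈ Metric.ball (0:E4) r, σ p (X01 p) (JL p) = 0)
    (hd : ∀ p ∈ Metric.ball (0:E4) (r / 2),
      ∫ ζ in Metric.closedBall (0:ℂ) 1, σ (discMap p ζ) p (JL p) = 0) :
    ∃ η : E4 → E4 →L[ℝ] ℝ, Fl η ∧ ∀ p ∈ Metric.ball (0:E4) (r / 4),
      η p (X01 p) = 0 ∧ η p (JL p) = 0 ∧
      ∀ u v, fderiv ℝ η p u v - fderiv ℝ η p v u = σ p u v := by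
  have hμ := muF_fl hσ
  have hdμ := muF_closed hσ.1 r hcl halt
  obtain ⟨f₁, hf₁, hX1⟩ := solve_X1 (hμ.vec (Px - Py))
  have hX1' : ∀ p, fderiv ℝ f₁ p (X01 p) = muF σ p (X01 p) := by
    intro p; rw [hX1, X01_eq]; rfl
  set μ' : E4 → E4 →L[ℝ] ℝ := fun q => muF σ q - fderiv ℝ f₁ q with hμ'
  have hμ'fl : Fl μ' := hμ.sub hf₁.fderiv
  have hdμ' : ∀ p ∈ Metric.ball (0:E4) r, ∀ u v,
      fderiv ℝ μ' p u v - fderiv ℝ μ' p v u = σ p u v := fun p hp u v => by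
    rw [← hdμ p hp u v]; exact fderiv_sub_closed hμ.1 hf₁.1 p u v
  have hz : ∀ p, μ' p ((Px - Py) p) = 0 := by
    intro p
    have := hX1' p
    rw [X01_eq] at this
    simp only [hμ', sub_apply] at this ⊢
    rw [this]; ring
  have hg2 := hμ'fl.vec JL
  obtain ⟨f₂, hf₂, h21, h22⟩ := solve_X2 hg2 (r := r / 2) (fun p hp => by
    have hpr : p ∈ Metric.ball (0:E4) r := Metric.ball_subset_ball (by linarith) hp
    have e1 := fderiv_vec hμ'fl.1 (Px - Py) p (JL p)
    have e2 : fderiv ℝ (fun q => μ' q ((Px - Py) q)) p (JL p) = 0 := by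
      have : (fun q => μ' q ((Px - Py) q)) = fun _ => 0 := funext hz
      rw [this]; simp
    rw [fderiv_vec hμ'fl.1]
    have e3 := hdμ' p hpr (X01 p) (JL p)
    rw [hlag p hpr] at e3
    have e4 : (Px - Py) (JL p) = JL (X01 p) := by rw [← X01_JL, X01_eq]; rfl
    have e5 : (Px - Py) p = X01 p := by rw [X01_eq]; rfl
    rw [e2, e4, e5] at e1
    linarith) (fun p hp => by
    have i1 := muF_disc hσ.1 r halt p hp (hd p hp)
    have i2 := intervalIntegral.integral_eq_sub_of_hasDerivAt (a := 0) (b := 2 * Real.pi)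
      (fun t _ => comp_Rot_hasDerivAt hf₁.1 p t)
      ((fderiv_Rot_continuous hf₁.1 p).intervalIntegrable _ _)
    rw [Rot_zero, Rot_two_pi, sub_self] at i2
    simp only [hμ', sub_apply]
    rw [intervalIntegral.integral_sub, i1, i2, sub_zero]
    · refine Continuous.intervalIntegrable ?_ _ _
      exact (hμ.1.continuous.comp (Rot_continuous p)).clm_apply
        (JL.continuous.comp (Rot_continuous p))
    · exact (fderiv_Rot_continuous hf₁.1 p).intervalIntegrable _ _)
  refine ⟨fun q => μ' q - fderiv ℝ f₂ q, hμ'fl.sub hf₂.fderiv, fun p hp => ⟨?_, ?_, fun u v => ?_⟩⟩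
  · have := hz p
    rw [sub_apply, h21 p (by rwa [show r / 2 / 2 = r / 4 by ring]), X01_eq]
    simpa using this
  · rw [sub_apply, h22 p (by rwa [show r / 2 / 2 = r / 4 by ring])]
    simp
  · rw [← hdμ' p (Metric.ball_subset_ball (by linarith) hp) u v]
    exact fderiv_sub_closed hμ'fl.1 hf₂.1 p u v

/-- differential of `q1` at `p` -/
def B1 (p : E4) : E4 →L[ℝ] ℝ :=
  p 1 • ContinuousLinearMap.proj (R := ℝ) (φ := fun _ : Fin 4 => ℝ) 0
  + p 0 • ContinuousLinearMap.proj (R := ℝ) (φ := fun _ : Fin 4 => ℝ) 1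
  + p 3 • ContinuousLinearMap.proj (R := ℝ) (φ := fun _ : Fin 4 => ℝ) 2
  + p 2 • ContinuousLinearMap.proj (R := ℝ) (φ := fun _ : Fin 4 => ℝ) 3

/-- differential of `q2` at `p` -/
def B2 (p : E4) : E4 →L[ℝ] ℝ :=
  p 3 • ContinuousLinearMap.proj (R := ℝ) (φ := fun _ : Fin 4 => ℝ) 0
  - p 2 • ContinuousLinearMap.proj (R := ℝ) (φ := fun _ : Fin 4 => ℝ) 1
  - p 1 • ContinuousLinearMap.proj (R := ℝ) (φ := fun _ : Fin 4 => ℝ) 2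
  + p 0 • ContinuousLinearMap.proj (R := ℝ) (φ := fun _ : Fin 4 => ℝ) 3

theorem B1_apply (p v : E4) : B1 p v = p 1 * v 0 + p 0 * v 1 + p 3 * v 2 + p 2 * v 3 := by
  simp [B1]
theorem B2_apply (p v : E4) : B2 p v = p 3 * v 0 - p 2 * v 1 - p 1 * v 2 + p 0 * v 3 := by
  simp [B2]
theorem B1_symm (p v : E4) : B1 p v = B1 v p := by simp only [B1_apply]; ring
theorem B2_symm (p v : E4) : B2 p v = B2 v p := by simp only [B2_apply]; ring

/-- gradient of `q2` -/
def G2 : E4 →L[ℝ] E4 :=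
  LinearMap.toContinuousLinearMap
    { toFun := fun p => ![p 3, -(p 2), -(p 1), p 0]
      map_add' := fun p q => by ext i; fin_cases i <;> simp <;> ring
      map_smul' := fun c p => by ext i; fin_cases i <;> simp }

theorem G2_apply (p : E4) : G2 p = ![p 3, -(p 2), -(p 1), p 0] := rfl

theorem frame_id (p v : E4) : nsq p • v = B1 p v • Sw p + B2 p v • G2 p
    + (v 0 * p 0 - v 1 * p 1 + v 2 * p 2 - v 3 * p 3) • X01 p
    + (-(v 0 * p 2) - v 1 * p 3 + v 2 * p 0 + v 3 * p 1) • JL p := by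
  ext i; fin_cases i <;> simp [B1_apply, B2_apply, Sw_apply, G2_apply, X01, JL_apply, nsq] <;> ring

theorem Fl.zero {F : Type} [NormedAddCommGroup F] [NormedSpace ℝ F] {g : E4 → F} (hg : Fl g) :
    g 0 = 0 := by
  have := hg.flatAt 0
  have h2 := norm_iteratedFDeriv_zero (𝕜 := ℝ) (f := g) (x := 0)
  rw [this] at h2
  simpa using h2.symm

theorem fderiv_app {η : E4 → E4 →L[ℝ] ℝ} (hη : ContDiff ℝ ∞ η) (p u v : E4) :
    fderiv ℝ (fun q => η q v) p u = fderiv ℝ η p u v := by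
  have hd : HasFDerivAt η (fderiv ℝ η p) p := (hη.differentiable (by simp) _).hasFDerivAt
  rw [(hd.clm_apply (hasFDerivAt_const v p)).fderiv]
  simp

theorem exists_ab {η : E4 → E4 →L[ℝ] ℝ} (hη : Fl η) {r : ℝ}
    (h : ∀ p ∈ Metric.ball (0:E4) r, η p (X01 p) = 0 ∧ η p (JL p) = 0) :
    ∃ a b : E4 → ℝ, Fl a ∧ Fl b ∧ ∀ p ∈ Metric.ball (0:E4) r, ∀ u v,
      fderiv ℝ η p u v - fderiv ℝ η p v u =
        fderiv ℝ a p u * B1 p v - fderiv ℝ a p v * B1 p u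
        + (fderiv ℝ b p u * B2 p v - fderiv ℝ b p v * B2 p u) := by
  have ha := Dv_fl (hη.vec Sw) (ψ := fun _ => 1) contDiff_const 1
  have hb := Dv_fl (hη.vec G2) (ψ := fun _ => 1) contDiff_const 1
  set a := Dv (fun q => η q (Sw q)) (fun _ => 1) 1 with hadef
  set b := Dv (fun q => η q (G2 q)) (fun _ => 1) 1 with hbdef
  have key : ∀ p ∈ Metric.ball (0:E4) r, ∀ v, η p v = a p * B1 v p + b p * B2 v p := by
    intro p hp v
    by_cases h0 : p = 0
    · subst h0; rw [hη.zero]; simp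
    have hn := nsq_pos h0
    have := congrArg (η p) (frame_id p v)
    simp only [map_add, map_smul, (h p hp).1, (h p hp).2, smul_eq_mul, mul_zero, add_zero] at this
    rw [hadef, hbdef, ← B1_symm p v, ← B2_symm p v]
    simp only [Dv, smul_eq_mul, pow_one, mul_one]
    field_simp
    linarith
  refine ⟨a, b, ha, hb, fun p hp u v => ?_⟩
  have kd : ∀ u v, fderiv ℝ η p u v = fderiv ℝ a p u * B1 p v + a p * B1 u v
      + (fderiv ℝ b p u * B2 p v + b p * B2 u v) := by
    intro u v
    have he : (fun q => η q v) =ᶠ[𝓝 p] fun q => a q * B1 v q + b q * B2 v q := by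
      filter_upwards [Metric.isOpen_ball.mem_nhds hp] with y hy using key y hy v
    rw [← fderiv_app hη.1, he.fderiv_eq]
    have da : HasFDerivAt a (fderiv ℝ a p) p := (ha.1.differentiable (by simp) _).hasFDerivAt
    have db : HasFDerivAt b (fderiv ℝ b p) p := (hb.1.differentiable (by simp) _).hasFDerivAt
    have := ((da.mul (B1 v).hasFDerivAt).add (db.mul (B2 v).hasFDerivAt)).fderiv
    have h2 : fderiv ℝ (fun q => a q * B1 v q + b q * B2 v q) p = _ := this
    rw [h2]
    simp only [add_apply, smul_apply, smul_eq_mul]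
    rw [B1_symm v p, B1_symm v u, B2_symm v p, B2_symm v u]; ring
  rw [kd, kd, B1_symm u v, B2_symm u v]
  ring

/-- joint flow of the two linear Hamiltonian fields -/
def Lab (y : ℝ × ℝ) : E4 →L[ℝ] E4 :=
  Real.exp y.1 • (Real.cos y.2 • Px + Real.sin y.2 • JL.comp Px)
  + Real.exp (-y.1) • (Real.cos y.2 • Py + Real.sin y.2 • JL.comp Py)

theorem Lab_apply (y : ℝ × ℝ) (p : E4) : Lab y p =
    ![Real.exp y.1 * (Real.cos y.2 * p 0 - Real.sin y.2 * p 2),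
      Real.exp (-y.1) * (Real.cos y.2 * p 1 - Real.sin y.2 * p 3),
      Real.exp y.1 * (Real.cos y.2 * p 2 + Real.sin y.2 * p 0),
      Real.exp (-y.1) * (Real.cos y.2 * p 3 + Real.sin y.2 * p 1)] := by
  ext i; fin_cases i <;> simp [Lab, Px_apply, Py_apply, JL_apply] <;> ring

theorem Lab_contDiff : ContDiff ℝ ∞ Lab := by
  unfold Lab
  fun_prop

theorem Lab_zero : Lab 0 = ContinuousLinearMap.id ℝ E4 := by
  ext p i
  rw [Lab_apply]
  fin_cases i <;> simp

theorem Lab_omega0 (y : ℝ × ℝ) (u v : E4) : omega0 (Lab y u) (Lab y v) = omega0 u v := by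
  have h1 : Real.exp y.1 * Real.exp (-y.1) = 1 := by rw [← Real.exp_add]; simp
  have h2 := Real.cos_sq_add_sin_sq y.2
  simp only [omega0, Lab_apply, Matrix.cons_val]
  linear_combination (u 1 * v 0 - u 0 * v 1 + u 3 * v 2 - u 2 * v 3) * ((Real.cos y.2 ^ 2 + Real.sin y.2 ^ 2) * h1 + h2)

theorem Lab_q1 (y : ℝ × ℝ) (u : E4) : q1 (Lab y u) = q1 u := by
  have h1 : Real.exp y.1 * Real.exp (-y.1) = 1 := by rw [← Real.exp_add]; simp
  have h2 := Real.cos_sq_add_sin_sq y.2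
  simp only [q1, Lab_apply, Matrix.cons_val]
  linear_combination (u 0 * u 1 + u 2 * u 3) * ((Real.cos y.2 ^ 2 + Real.sin y.2 ^ 2) * h1 + h2)

theorem Lab_q2 (y : ℝ × ℝ) (u : E4) : q2 (Lab y u) = q2 u := by
  have h1 : Real.exp y.1 * Real.exp (-y.1) = 1 := by rw [← Real.exp_add]; simp
  have h2 := Real.cos_sq_add_sin_sq y.2
  simp only [q2, Lab_apply, Matrix.cons_val]
  linear_combination (u 0 * u 3 - u 2 * u 1) * ((Real.cos y.2 ^ 2 + Real.sin y.2 ^ 2) * h1 + h2)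

/-- the inverse of the Darboux map -/
def Psi (a b : E4 → ℝ) (p : E4) : E4 := Lab (-a p, -b p) p

theorem Psi_contDiff {a b : E4 → ℝ} (ha : ContDiff ℝ ∞ a) (hb : ContDiff ℝ ∞ b) :
    ContDiff ℝ ∞ (Psi a b) :=
  (Lab_contDiff.comp (ha.neg.prodMk hb.neg)).clm_apply contDiff_id

theorem Psi_fl {a b : E4 → ℝ} (ha : Fl a) (hb : Fl b) : Fl (fun p => Psi a b p - p) := by
  refine ⟨(Psi_contDiff ha.1 hb.1).sub contDiff_id, fun N => ?_⟩
  have hL : (fun y => Lab y - Lab 0) =O[𝓝 0] fun y => y - 0 :=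
    (Lab_contDiff.differentiable (by simp) 0).isBigO_sub
  have hy : Tendsto (fun p => (-a p, -b p)) (𝓝 0) (𝓝 (0 : ℝ × ℝ)) := by
    have h := (ha.1.continuous.neg.prodMk hb.1.continuous.neg).tendsto 0
    simpa [ha.zero, hb.zero, Prod.zero_eq_mk] using h
  have h1 := hL.comp_tendsto hy
  have h2 : (fun p => (-a p, -b p)) =O[𝓝 0] fun p : E4 => ‖p‖ ^ N :=
    ((ha.2 N).neg_left).prod_left ((hb.2 N).neg_left)
  have h3 : (fun p => Lab (-a p, -b p) - Lab 0) =O[𝓝 0] fun p : E4 => ‖p‖ ^ N := by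
    refine IsBigO.trans h1 ?_
    simpa [Function.comp_def] using h2
  have hid : (fun p : E4 => p) =O[𝓝 0] (fun _ : E4 => (1:ℝ)) :=
    continuous_id.continuousAt.isBigO_one ℝ
  have h4 : (fun p => Psi a b p - p) =O[𝓝 0] fun q : E4 => ‖q‖ ^ N * (1:ℝ) := by
    refine IsBigO.trans (IsBigO.of_bound 1 (Eventually.of_forall fun q => ?_))
      (h3.norm_left.mul hid.norm_left)
    rw [one_mul, norm_mul, norm_norm, norm_norm]
    have : Psi a b q - q = (Lab (-a q, -b q) - Lab 0) q := by
      rw [Lab_zero]; rfl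
    rw [this]
    exact (Lab (-a q, -b q) - Lab 0).le_opNorm _
  simpa using h4

theorem Lab_X01 (y : ℝ × ℝ) (p : E4) : Lab y (X01 p) = X01 (Lab y p) := by
  rw [Lab_apply, Lab_apply]
  ext i; fin_cases i <;> simp [X01] <;> ring

theorem Lab_JL (y : ℝ × ℝ) (p : E4) : Lab y (JL p) = JL (Lab y p) := by
  rw [Lab_apply, Lab_apply]
  ext i; fin_cases i <;> simp [JL_apply] <;> ring

theorem Lab_fderiv (y s : ℝ × ℝ) (p : E4) :
    fderiv ℝ Lab y s p = Lab y (s.1 • X01 p + s.2 • JL p) := by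
  have hf : HasFDerivAt (fun y : ℝ × ℝ => y.1) (ContinuousLinearMap.fst ℝ ℝ ℝ) y := hasFDerivAt_fst
  have hs : HasFDerivAt (fun y : ℝ × ℝ => y.2) (ContinuousLinearMap.snd ℝ ℝ ℝ) y := hasFDerivAt_snd
  have h := ((hf.exp.smul ((hs.cos.smul_const Px).add (hs.sin.smul_const (JL.comp Px)))).add
    (hf.neg.exp.smul ((hs.cos.smul_const Py).add (hs.sin.smul_const (JL.comp Py)))))
  have h2 : fderiv ℝ Lab y = _ := h.fderiv
  rw [h2, Lab_apply]
  ext i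
  fin_cases i <;> simp [Px_apply, Py_apply, JL_apply, X01] <;> ring

theorem Psi_fderiv {a b : E4 → ℝ} (ha : ContDiff ℝ ∞ a) (hb : ContDiff ℝ ∞ b) (p u : E4) :
    fderiv ℝ (Psi a b) p u = Lab (-a p, -b p)
      (u - fderiv ℝ a p u • X01 p - fderiv ℝ b p u • JL p) := by
  have da : HasFDerivAt a (fderiv ℝ a p) p := (ha.differentiable (by simp) _).hasFDerivAt
  have db : HasFDerivAt b (fderiv ℝ b p) p := (hb.differentiable (by simp) _).hasFDerivAt
  have dL : HasFDerivAt Lab (fderiv ℝ Lab (-a p, -b p)) (-a p, -b p) :=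
    (Lab_contDiff.differentiable (by simp) _).hasFDerivAt
  have h1 : HasFDerivAt (fun p => Lab (-a p, -b p)) _ p :=
    HasFDerivAt.comp (g := Lab) p dL (da.neg.prodMk db.neg)
  have h2 : fderiv ℝ (Psi a b) p = _ := (h1.clm_apply (hasFDerivAt_id p)).fderiv
  rw [h2]
  simp [Lab_fderiv]
  abel

theorem Psi_omega0 {a b : E4 → ℝ} (ha : ContDiff ℝ ∞ a) (hb : ContDiff ℝ ∞ b) (p u v : E4) :
    omega0 (fderiv ℝ (Psi a b) p u) (fderiv ℝ (Psi a b) p v) = omega0 u v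
      + (fderiv ℝ a p u * B1 p v - fderiv ℝ a p v * B1 p u
        + (fderiv ℝ b p u * B2 p v - fderiv ℝ b p v * B2 p u)) := by
  rw [Psi_fderiv ha hb, Psi_fderiv ha hb, Lab_omega0]
  simp only [omega0, B1_apply, B2_apply, X01, JL_apply, Pi.sub_apply, Pi.smul_apply, smul_eq_mul,
    Matrix.cons_val]
  ring

theorem exists_inverse {Ψ : E4 → E4} (hΨ : ContDiff ℝ ∞ Ψ) (hfl : Fl (fun p => Ψ p - p))
    {ρ : ℝ} (hρ : 0 < ρ) :
    ∃ (Φ : E4 → E4) (V : Set E4), IsOpen V ∧ (0:E4) ∈ V ∧ ContDiffOn ℝ ∞ Φ V ∧ InjOn Φ V ∧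
      flatAt (fun p => Φ p - p) 0 ∧ ∀ p ∈ V, Φ p ∈ Metric.ball (0:E4) ρ ∧ Ψ (Φ p) = p ∧
        ∀ u, fderiv ℝ Ψ (Φ p) (fderiv ℝ Φ p u) = u := by
  have h0 : Ψ 0 = 0 := by simpa using hfl.zero
  have hd : ∀ p, HasFDerivAt Ψ (fderiv ℝ Ψ p) p := fun p => (hΨ.differentiable (by simp) p).hasFDerivAt
  have hd0 : fderiv ℝ Ψ 0 = ContinuousLinearMap.id ℝ E4 := by
    have h1 := hfl.fderiv.zero
    have h2 : fderiv ℝ (fun p => Ψ p - p) 0 = _ := ((hd 0).sub (hasFDerivAt_id 0)).fderiv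
    rw [h2, sub_eq_zero] at h1
    exact h1
  have hstrict : HasStrictFDerivAt Ψ ((ContinuousLinearEquiv.refl ℝ E4 : E4 ≃L[ℝ] E4) : E4 →L[ℝ] E4) 0 := by
    have := hΨ.contDiffAt.hasStrictFDerivAt (x := 0) (by simp)
    rw [hd0] at this
    exact this
  set e := hstrict.toOpenPartialHomeomorph Ψ with he
  have hec : ∀ p, e p = Ψ p := fun p => rfl
  have hs0 : (0:E4) ∈ e.source := hstrict.mem_toOpenPartialHomeomorph_source
  have ht0 : (0:E4) ∈ e.target := by
    have := e.map_source hs0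
    rwa [hec, h0] at this
  have hsym0 : e.symm 0 = 0 := by
    have := e.left_inv hs0
    rwa [hec, h0] at this
  set S : Set E4 := Metric.ball 0 ρ ∩
    (fderiv ℝ Ψ) ⁻¹' range ((↑) : (E4 ≃L[ℝ] E4) → E4 →L[ℝ] E4) with hS
  have hSo : IsOpen S := Metric.isOpen_ball.inter
    (ContinuousLinearEquiv.isOpen.preimage (hΨ.continuous_fderiv (by simp)))
  set V : Set E4 := e.target ∩ e.symm ⁻¹' S with hV
  have hVo : IsOpen V := e.isOpen_inter_preimage_symm hSo
  have h0V : (0:E4) ∈ V := by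
    refine ⟨ht0, ?_⟩
    rw [mem_preimage, hsym0]
    exact ⟨Metric.mem_ball_self hρ, ⟨ContinuousLinearEquiv.refl ℝ E4, hd0.symm⟩⟩
  have hcd : ∀ p ∈ V, ContDiffAt ℝ ∞ e.symm p := by
    rintro p ⟨hp, hpS⟩
    obtain ⟨f, hf⟩ := hpS.2
    refine e.contDiffAt_symm hp (f₀' := f) ?_ hΨ.contDiffAt
    rw [hf]
    exact hd _
  have hinv : ∀ p ∈ V, Ψ (e.symm p) = p := fun p hp => e.right_inv hp.1
  have hon : ContDiffOn ℝ ∞ e.symm V := fun p hp => (hcd p hp).contDiffWithinAt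
  refine ⟨e.symm, V, hVo, h0V, hon, ?_, ?_, fun p hp => ⟨hp.2.1, hinv p hp, fun u => ?_⟩⟩
  · exact e.symm.injOn.mono (fun p hp => hp.1)
  · obtain ⟨g, hg, r, hr, hgr⟩ := exists_ext (fun p => e.symm p - p) V hVo h0V
      (hon.sub contDiffOn_id)
    have hev : g =ᶠ[𝓝 0] fun p => e.symm p - p := by
      filter_upwards [Metric.ball_mem_nhds (0:E4) hr] with p hp using (hgr p hp).2
    have hgfl : Fl g := by
      refine ⟨hg, fun N => ?_⟩
      have hsd : (fun p => e.symm p - e.symm 0) =O[𝓝 0] fun p => p - 0 :=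
        ((hcd 0 h0V).differentiableAt (by simp)).isBigO_sub
      simp only [hsym0, sub_zero] at hsd
      have ht : Tendsto e.symm (𝓝 0) (𝓝 0) := by
        have := (hcd 0 h0V).continuousAt.tendsto
        rwa [hsym0] at this
      have h1 := ((hfl.2 N).comp_tendsto ht).trans (hsd.norm_norm.pow N)
      refine IsBigO.congr' h1.neg_left ?_ EventuallyEq.rfl
      filter_upwards [Metric.ball_mem_nhds (0:E4) hr] with p hp
      rw [(hgr p hp).2]
      simp only [Function.comp_apply]
      rw [hinv p (hgr p hp).1]
      simp
    intro n
    rw [← (hev.iteratedFDeriv ℝ n).eq_of_nhds]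
    exact hgfl.flatAt n
  · have hs : HasFDerivAt e.symm (fderiv ℝ e.symm p) p :=
      ((hcd p hp).differentiableAt (by simp)).hasFDerivAt
    have hc : HasFDerivAt (fun q => Ψ (e.symm q)) _ p := HasFDerivAt.comp (g := Ψ) p (hd _) hs
    have hid : HasFDerivAt (fun q => Ψ (e.symm q)) (ContinuousLinearMap.id ℝ E4) p := by
      refine (hasFDerivAt_id p).congr_of_eventuallyEq ?_
      filter_upwards [hVo.mem_nhds hp] with q hq using hinv q hq
    exact DFunLike.congr_fun (hc.unique hid) u

/-- elementary bilinear form -/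
def Ebil (i j : Fin 4) : E4 →L[ℝ] E4 →L[ℝ] ℝ :=
  ContinuousLinearMap.smulRight (ContinuousLinearMap.proj (R := ℝ) (φ := fun _ : Fin 4 => ℝ) i)
    (ContinuousLinearMap.proj (R := ℝ) (φ := fun _ : Fin 4 => ℝ) j)

theorem Ebil_apply (i j : Fin 4) (u v : E4) : Ebil i j u v = u i * v j := by
  simp [Ebil]

/-- canonical form as a continuous bilinear map -/
def Om0 : E4 →L[ℝ] E4 →L[ℝ] ℝ := Ebil 1 0 - Ebil 0 1 + Ebil 3 2 - Ebil 2 3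

theorem Om0_apply (u v : E4) : Om0 u v = omega0 u v := by
  simp [Om0, Ebil_apply, omega0]

theorem bil_expand (b : E4 →L[ℝ] E4 →L[ℝ] ℝ) :
    b = ∑ i, ∑ j, b (Pi.single i 1) (Pi.single j 1) • Ebil i j := by
  refine ContinuousLinearMap.ext fun u => ContinuousLinearMap.ext fun v => ?_
  have hu : u = ∑ i, u i • (Pi.single i 1 : E4) := by
    ext k; fin_cases k <;> simp [Fin.sum_univ_four]
  have hv : v = ∑ i, v i • (Pi.single i 1 : E4) := by
    ext k; fin_cases k <;> simp [Fin.sum_univ_four]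
  conv_lhs => rw [hu, hv]
  simp only [map_sum, map_smul, Fin.sum_univ_four, add_apply, smul_apply, smul_eq_mul, map_add,
    Ebil_apply]
  ring

theorem sum_isBigO {F : Type} [NormedAddCommGroup F] [NormedSpace ℝ F] (e : Fin 4 → Fin 4 → F)
    (c : Fin 4 → Fin 4 → E4 → ℝ) (N : ℕ) (hc : ∀ i j, c i j =O[𝓝 0] fun p : E4 => ‖p‖ ^ N) :
    (fun p => ∑ i, ∑ j, c i j p • e i j) =O[𝓝 0] fun p : E4 => ‖p‖ ^ N := by
  refine IsBigO.fun_sum fun i _ => ?_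
  refine IsBigO.fun_sum fun j _ => ?_
  have h3 := (hc i j).smul (isBigO_const_const (e i j) (one_ne_zero (α := ℝ)) (𝓝 (0:E4)))
  simpa using h3

theorem fl_of_components {s : E4 → E4 →L[ℝ] E4 →L[ℝ] ℝ} (hs : ContDiff ℝ ∞ s)
    (h : ∀ u v, flatAt (fun p => s p u v) 0) : Fl s := by
  refine ⟨hs, fun N => ?_⟩
  have hc : ∀ u v, Fl (fun p => s p u v) := fun u v =>
    fl_of_flatAt ((hs.clm_apply contDiff_const).clm_apply contDiff_const) (h u v)
  have h2 := sum_isBigO Ebil (fun i j p => s p (Pi.single i 1) (Pi.single j 1)) N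
    fun i j => (hc (Pi.single i 1) (Pi.single j 1)).2 N
  exact h2.congr_left fun p => (bil_expand (s p)).symm

theorem discMap_norm_le (p : E4) (ζ : ℂ) (hζ : ‖ζ‖ ≤ 1) : ‖discMap p ζ‖ ≤ 2 * ‖p‖ := by
  have e : discMap p ζ = ζ.re • p + ζ.im • JL p := by
    ext i; fin_cases i <;> simp [discMap, JL_apply, Matrix.vecHead, Matrix.vecTail] <;> ring
  have h1 : ‖ζ.re • p‖ ≤ ‖p‖ := by
    rw [norm_smul]
    exact mul_le_of_le_one_left (norm_nonneg _) ((Complex.abs_re_le_norm ζ).trans hζ)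
  have h2 : ‖ζ.im • JL p‖ ≤ ‖p‖ := by
    rw [norm_smul]
    exact (mul_le_of_le_one_left (norm_nonneg _) ((Complex.abs_im_le_norm ζ).trans hζ)).trans
      (JL_norm_le p)
  rw [e]
  calc _ ≤ _ := norm_add_le _ _
    _ ≤ _ := by linarith

theorem main_aux
    (om : E4 → (E4 →L[ℝ] E4 →L[ℝ] ℝ)) (U : Set E4)
    (hUopen : IsOpen U) (hU0 : (0:E4) ∈ U)
    (hsm : ContDiffOn ℝ ∞ om U)
    (halt : ∀ p ∈ U, ∀ u v : E4, om p u v = -(om p v u))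
    (hclosed : ∀ p ∈ U, ∀ u v w : E4,
      fderiv ℝ (fun x => om x v w) p u + fderiv ℝ (fun x => om x w u) p v +
        fderiv ℝ (fun x => om x u v) p w = 0)
    (hflat : ∀ u v : E4, flatAt (fun p => om p u v - omega0 u v) 0)
    (hlag : ∀ p ∈ U, om p (X01 p) (X02 p) = 0)
    (hdisc : ∀ p ∈ U,
      (∫ ζ in Metric.closedBall (0:ℂ) 1,
        (om (discMap p ζ) p (Jmul p) - omega0 p (Jmul p))) = 0) :
    ∃ (Φ : E4 → E4) (V : Set E4), IsOpen V ∧ (0:E4) ∈ V ∧ ContDiffOn ℝ ∞ Φ V ∧ InjOn Φ V ∧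
      flatAt (fun p => Φ p - p) 0 ∧
      (∀ p ∈ V, ∀ u v : E4, om (Φ p) (fderiv ℝ Φ p u) (fderiv ℝ Φ p v) = omega0 u v) ∧
      (∀ p ∈ V, qmap (Φ p) = qmap p) := by
  obtain ⟨s, hs, r, hr, hsr⟩ := exists_ext (fun p => om p - Om0) U hUopen hU0
    (hsm.sub contDiffOn_const)
  have hval : ∀ p ∈ Metric.ball (0:E4) r, ∀ u v, s p u v = om p u v - omega0 u v := by
    intro p hp u v
    rw [(hsr p hp).2, sub_apply, sub_apply, Om0_apply]
  have hev : ∀ p ∈ Metric.ball (0:E4) r, ∀ u v,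
      (fun q => s q u v) =ᶠ[𝓝 p] fun q => om q u v - omega0 u v := by
    intro p hp u v
    filter_upwards [Metric.isOpen_ball.mem_nhds hp] with q hq using hval q hq u v
  have hsfl : Fl s := fl_of_components hs fun u v n => by
    rw [((hev 0 (Metric.mem_ball_self hr) u v).iteratedFDeriv ℝ n).eq_of_nhds]
    exact hflat u v n
  have hfd : ∀ p ∈ Metric.ball (0:E4) r, ∀ u v w,
      fderiv ℝ (fun x => om x v w) p u = fderiv ℝ s p u v w := by
    intro p hp u v w
    have h1 := (hev p hp v w).fderiv_eq (𝕜 := ℝ)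
    rw [fderiv_sub_const] at h1
    rw [← h1]
    have hd : HasFDerivAt s (fderiv ℝ s p) p := (hs.differentiable (by simp) _).hasFDerivAt
    rw [((hd.clm_apply (hasFDerivAt_const v p)).clm_apply (hasFDerivAt_const w p)).fderiv]
    simp
  obtain ⟨η, hη, hηp⟩ := exists_primitive hsfl hr
    (fun p hp u v w => by
      have := hclosed p (hsr p hp).1 u v w
      rwa [hfd p hp, hfd p hp, hfd p hp] at this)
    (fun p hp u v => by
      rw [hval p hp, hval p hp, halt p (hsr p hp).1]
      simp only [omega0]; ring)
    (fun p hp => by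
      rw [hval p hp, ← JL_X02, hlag p (hsr p hp).1]
      simp [omega0, X01, X02]; ring)
    (fun p hp => by
      have hpU : p ∈ U := (hsr p (Metric.ball_subset_ball (by linarith) hp)).1
      rw [← hdisc p hpU]
      refine setIntegral_congr_fun measurableSet_closedBall fun ζ hζ => ?_
      have hζ1 : ‖ζ‖ ≤ 1 := by simpa using hζ
      have hn := discMap_norm_le p ζ hζ1
      have hb : discMap p ζ ∈ Metric.ball (0:E4) r := by
        simp at hp ⊢; linarith
      exact hval _ hb p (JL p))
  obtain ⟨a, b, ha, hb, hab⟩ := exists_ab hη (r := r / 4)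
    fun p hp => ⟨(hηp p hp).1, (hηp p hp).2.1⟩
  obtain ⟨Φ, V, hV, h0V, hΦ, hinj, hΦfl, hΦp⟩ := exists_inverse (Psi_contDiff ha.1 hb.1)
    (Psi_fl ha hb) (ρ := r / 4) (by linarith)
  refine ⟨Φ, V, hV, h0V, hΦ, hinj, hΦfl, fun p hp u v => ?_, fun p hp => ?_⟩
  · obtain ⟨h1, -, h3⟩ := hΦp p hp
    have h4 := Psi_omega0 ha.1 hb.1 (Φ p) (fderiv ℝ Φ p u) (fderiv ℝ Φ p v)
    rw [h3, h3, ← hab _ h1, (hηp _ h1).2.2,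
      hval _ (Metric.ball_subset_ball (by linarith) h1)] at h4
    linarith
  · obtain ⟨-, h2, -⟩ := hΦp p hp
    have e1 : q1 (Φ p) = q1 p := by
      conv_rhs => rw [← h2]
      exact (Lab_q1 _ _).symm
    have e2 : q2 (Φ p) = q2 p := by
      conv_rhs => rw [← h2]
      exact (Lab_q2 _ _).symm
    simp only [qmap, e1, e2]

end aux

/-- **A Darboux lemma for focus-focus foliations.**
Let `ω` be a symplectic form near `0 ∈ ℝ⁴` such that (a) `ω − ω₀` is flat at the
origin, (b) the level sets of `q` are Lagrangian for `ω`, and (c) the integral of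
`ω − ω₀` over each disc `D_z = {(ζz₁, ζz₂) : |ζ| ≤ 1}` vanishes.  Then there are
local diffeomorphisms `Φ` of `(ℝ⁴,0)` and `U = (U₁,U₂)` of `(ℝ²,0)`, both infinitely
tangent to the identity, with `Φ*ω = ω₀` and `q∘Φ = U∘q` near the origin. -/
theorem darboux_lemma_focus_focus_foliation
    (ω : E4 → (E4 →L[ℝ] E4 →L[ℝ] ℝ)) (U : Set E4)
    (hUopen : IsOpen U) (hU0 : (0:E4) ∈ U)
    (hsm : ContDiffOn ℝ (⊤ : ℕ∞) ω U)
    (halt : ∀ p ∈ U, ∀ u v : E4, ω p u v = -(ω p v u))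
    (hnondeg : ∀ p ∈ U, ∀ u : E4, (∀ v : E4, ω p u v = 0) → u = 0)
    (hclosed : ∀ p ∈ U, ∀ u v w : E4,
      fderiv ℝ (fun x => ω x v w) p u + fderiv ℝ (fun x => ω x w u) p v +
        fderiv ℝ (fun x => ω x u v) p w = 0)
    -- (a) `ω = ω₀ + O(∞)`
    (hflat : ∀ u v : E4, flatAt (fun p => ω p u v - omega0 u v) 0)
    -- (b) the regular level sets of `q` are Lagrangian for `ω`
    (hlag : ∀ p ∈ U, ω p (X01 p) (X02 p) = 0)
    -- (c) `∫_{D_z} (ω − ω₀) = 0`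
    (hdisc : ∀ p ∈ U,
      (∫ ζ in Metric.closedBall (0:ℂ) 1,
        (ω (discMap p ζ) p (Jmul p) - omega0 p (Jmul p))) = 0) :
    ∃ (Φ : E4 → E4) (U12 : E2 → E2) (V : Set E4) (W : Set E2),
      IsOpen V ∧ (0:E4) ∈ V ∧ ContDiffOn ℝ (⊤ : ℕ∞) Φ V ∧ Set.InjOn Φ V ∧
      IsOpen W ∧ (0:E2) ∈ W ∧ ContDiffOn ℝ (⊤ : ℕ∞) U12 W ∧ Set.InjOn U12 W ∧
      flatAt (fun p : E4 => Φ p - p) 0 ∧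
      flatAt (fun c : E2 => U12 c - c) 0 ∧
      (∀ p ∈ V, ∀ u v : E4,
        ω (Φ p) (fderiv ℝ Φ p u) (fderiv ℝ Φ p v) = omega0 u v) ∧
      (∀ p ∈ V, qmap (Φ p) = U12 (qmap p)) := by
  obtain ⟨Φ, V, h1, h2, h3, h4, h5, h6, h7⟩ :=
    main_aux ω U hUopen hU0 hsm halt hclosed hflat hlag hdisc
  refine ⟨Φ, id, V, Set.univ, h1, h2, h3, h4, isOpen_univ, Set.mem_univ _, contDiffOn_id,
    Set.injOn_id _, h5, ?_, h6, h7⟩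
  intro n
  have h8 : (fun c : E2 => id c - c) = fun _ => 0 := by
    funext c
    simp
  rw [h8]
  simp
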